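/- arXiv:0802.3200 — 4 statements merged into one kernel-verified Lean document; each statement's English description precedes it below -/
import Mathlib

section
/- Let q be a prime power, let F_q be the finite field with q elements, let b be a nonzero element of F_q, let n ≥ 1 be an integer, and set d = gcd(n+1, q−1). Then |N_{n+1}(0,b) − (q^n − 1)/(q−1)| ≤ (d−1)·q^{(n−1)/2}, where the bound is understood as a real-number inequality. -/
/-! Let `ℓ : E → F` be a nonzero linear functional, such as the trace, with `|F| = q` and
`[E : F] = n + 1`. Orthogonality of the characters `χ` of `Fˣ` turns the number of `α ∈ ker ℓ` of
norm `b` into a combination of the sums `S χ = ∑ α ∈ ker ℓ, χ (N α)`. The hyperplane `ker ℓ` is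
stable under scaling by `t ∈ Fˣ`, which multiplies `χ (N α)` by `χ t ^ (n + 1)`; hence `S χ = 0`
unless `χ ^ (n + 1) = 1`. The trivial character gives the main term `q ^ n - 1`. For each of the
other `d - 1` characters, detecting `ℓ α = 0` by an additive character `ψ` of `F` gives
`q * S χ = (q - 1) * G`, where `G` is the Gauss sum of `χ ∘ N` and `ψ ∘ ℓ`, of absolute value
`√(q ^ (n + 1))`. -/

section MulCharComap

variable {M N R : Type*} [CommMonoid M] [CommMonoid N] [CommMonoidWithZero R]

/-- The pullback of multiplicative characters along a monoid homomorphism `f : M →* N`. It is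
defined on units and extended by zero, so off the units it can differ from `χ ∘ f` unless `f`
reflects units. -/
noncomputable def mulCharComap (f : M →* N) : MulChar N R →* MulChar M R where
  toFun χ := MulChar.ofUnitHom (χ.toUnitHom.comp (Units.map f))
  map_one' := MulChar.ext fun a ↦ by
    simpa using MulChar.one_apply_coe (Units.map f a)
  map_mul' χ χ' := MulChar.ext fun a ↦ by simp

@[simp]
theorem mulCharComap_apply_coe (f : M →* N) (χ : MulChar N R) (a : Mˣ) :
    mulCharComap f χ a = χ (f a) := by
  simp [mulCharComap]

theorem mulCharComap_apply (f : M →* N) [IsLocalHom f] (χ : MulChar N R) (a : M) :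
    mulCharComap f χ a = χ (f a) := by
  by_cases ha : IsUnit a
  · exact mulCharComap_apply_coe f χ ha.unit
  · rw [MulChar.map_nonunit _ ha, MulChar.map_nonunit _ (mt (isUnit_of_map_unit f a) ha)]

theorem mulCharComap_injective {f : M →* N} (hf : Function.Surjective (Units.map f)) :
    Function.Injective (mulCharComap f : MulChar N R →* MulChar M R) := by
  refine fun χ χ' h ↦ MulChar.ext fun b ↦ ?_
  obtain ⟨a, rfl⟩ := hf b
  simpa using DFunLike.congr_fun h (a : M)

end MulCharComap

theorem isLocalHom_algebraNorm (A B : Type*) [CommRing A] [CommRing B] [Algebra A B]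
    [Module.Free A B] [Module.Finite A B] : IsLocalHom (Algebra.norm A (S := B)) where
  map_nonunit a ha := by
    rw [Algebra.norm_apply, ← LinearMap.isUnit_iff_isUnit_det, Module.End.isUnit_iff] at ha
    obtain ⟨x, hx⟩ := ha.2 1
    exact .of_mul_eq_one x hx

theorem mulCharComap_norm_algebraMap {A B R : Type*} [CommRing A] [CommRing B] [Algebra A B]
    [Module.Free A B] [CommMonoidWithZero R] (χ : MulChar A R) (t : Aˣ) :
    mulCharComap (Algebra.norm A) χ (algebraMap A B t) = (χ ^ Module.finrank A B) t := by
  have h := mulCharComap_apply_coe (Algebra.norm A) χ (Units.map (algebraMap A B : A →* B) t)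
  simpa [Algebra.norm_algebraMap, MulChar.pow_apply_coe] using h

theorem mulCharComap_norm_ne_one {F E R : Type*} [Field F] [Field E] [Finite E] [Algebra F E]
    [CommMonoidWithZero R] {χ : MulChar F R} (hχ : χ ≠ 1) :
    mulCharComap (Algebra.norm F (S := E)) χ ≠ 1 :=
  (map_ne_one_iff _ (mulCharComap_injective (FiniteField.unitsMap_norm_surjective F E))).2 hχ

theorem norm_mulChar_apply_coe {M K : Type*} [CommMonoid M] [Finite Mˣ] [NormedField K]
    (χ : MulChar M K) (a : Mˣ) : ‖χ a‖ = 1 := by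
  rw [← MulChar.coe_toUnitHom]
  exact (((Units.coeHom K).comp χ.toUnitHom).isOfFinOrder (isOfFinOrder_of_finite a)).norm_eq_one

section Orthogonality

variable {M R : Type*} [CommMonoid M] [Finite M] [CommRing R] [IsDomain R]
  [HasEnoughRootsOfUnity R (Monoid.exponent Mˣ)] [Fintype (MulChar M R)]

theorem sum_mulChar_apply [DecidableEq M] (a : M) :
    ∑ χ : MulChar M R, χ a = if a = 1 then (Nat.card Mˣ : R) else 0 := by
  split_ifs with ha
  · simp [ha, ← MulChar.card_eq_card_units_of_hasEnoughRootsOfUnity M R]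
  · obtain ⟨χ, hχ⟩ := MulChar.exists_apply_ne_one_of_hasEnoughRootsOfUnity M R ha
    refine eq_zero_of_mul_eq_self_left hχ ?_
    simp only [Finset.mul_sum, ← MulChar.mul_apply]
    exact Fintype.sum_equiv (Equiv.mulLeft χ) _ _ fun _ ↦ rfl

theorem sum_mulChar_inv_mul_apply [DecidableEq M] (b : Mˣ) (a : M) :
    ∑ χ : MulChar M R, χ ↑b⁻¹ * χ a = if a = b then (Nat.card Mˣ : R) else 0 := by
  simp only [← map_mul, sum_mulChar_apply, Units.inv_mul_eq_one, eq_comm (a := a)]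

theorem card_units_mul_card_filter_eq {X : Type*} [DecidableEq M] (s : Finset X) (f : X → M)
    (b : Mˣ) :
    (Nat.card Mˣ : R) * (s.filter fun x ↦ f x = b).card =
      ∑ χ : MulChar M R, χ ↑b⁻¹ * ∑ x ∈ s, χ (f x) := by
  simp only [Finset.mul_sum]
  rw [Finset.sum_comm]
  simp only [sum_mulChar_inv_mul_apply]
  rw [← Finset.sum_filter, Finset.sum_const, nsmul_eq_mul, mul_comm]

theorem card_mulChar_pow_eq_one [IsCyclic Mˣ] [DecidableEq (MulChar M R)] (m : ℕ) :
    (Finset.univ.filter fun χ : MulChar M R ↦ χ ^ m = 1).card = m.gcd (Nat.card Mˣ) := by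
  obtain ⟨e⟩ := MulChar.mulEquiv_units M R
  have : IsCyclic (MulChar M R) := isCyclic_of_surjective e.symm e.symm.surjective
  rw [← Nat.card_congr e.toEquiv, Nat.gcd_comm, ← IsCyclic.card_powMonoidHom_ker,
    ← Fintype.card_subtype, ← Nat.card_eq_fintype_card]
  rfl

end Orthogonality

theorem norm_gaussSum_eq_sqrt_card {E : Type*} [Field E] [Fintype E] {χ : MulChar E ℂ}
    (hχ : χ ≠ 1) {ψ : AddChar E ℂ} (hψ : ψ.IsPrimitive) :
    ‖gaussSum χ ψ‖ = √(Fintype.card E) := by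
  have h := congrArg norm (gaussSum_mul_gaussSum_eq_card hχ hψ)
  rw [← star_gaussSum_eq, norm_mul, norm_star, Complex.norm_natCast] at h
  rw [← h, Real.sqrt_mul_self (norm_nonneg _)]

/-- The sum of a multiplicative character `η` of a finite `F`-algebra `E` over the kernel of a
linear functional `ℓ`. For `ℓ` the trace and `η = χ ∘ Norm` these are the Fourier coefficients of
`b ↦ N_m(0, b)`. -/
def kerCharSum {F E R : Type*} [CommRing F] [DecidableEq F] [CommRing E] [Fintype E] [Algebra F E]
    [CommRing R] (ℓ : Module.Dual F E) (η : MulChar E R) : R :=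
  ∑ α with ℓ α = 0, η α

section KerCharSum

variable {F E R : Type*} [CommRing F] [DecidableEq F] [CommRing E] [Fintype E] [Algebra F E]
  [CommRing R] [IsDomain R]

theorem kerCharSum_eq_zero (ℓ : Module.Dual F E) {η : MulChar E R} {t : Fˣ}
    (ht : η (algebraMap F E t) ≠ 1) : kerCharSum ℓ η = 0 := by
  refine eq_zero_of_mul_eq_self_left ht ?_
  rw [kerCharSum, Finset.mul_sum]
  refine Finset.sum_equiv (Units.mulLeft (Units.map (algebraMap F E) t)) (fun α ↦ ?_) fun α _ ↦ ?_
  · simp [← Algebra.smul_def]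
  · simp

theorem kerCharSum_mulCharComap_norm_eq_zero [Module.Free F E] (ℓ : Module.Dual F E)
    {χ : MulChar F R} (hχ : χ ^ Module.finrank F E ≠ 1) :
    kerCharSum ℓ (mulCharComap (Algebra.norm F) χ) = 0 := by
  obtain ⟨t, ht⟩ := MulChar.ne_one_iff.1 hχ
  exact kerCharSum_eq_zero ℓ (by rwa [mulCharComap_norm_algebraMap])

variable [Fintype F]

theorem card_mul_kerCharSum_eq_sum {ψ : AddChar F R} (hψ : ψ.IsPrimitive) (ℓ : Module.Dual F E)
    (η : MulChar E R) :
    (Fintype.card F : R) * kerCharSum ℓ η = ∑ t : F, ∑ α : E, η α * ψ (t * ℓ α) := by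
  rw [Finset.sum_comm, kerCharSum, Finset.mul_sum, Finset.sum_filter]
  refine Finset.sum_congr rfl fun α _ ↦ ?_
  rw [← Finset.mul_sum, AddChar.sum_mulShift _ hψ]
  split_ifs <;> simp [mul_comm]

end KerCharSum

theorem sum_mul_addChar_unit_mul {F E R : Type*} [CommRing F] [CommRing E] [Fintype E]
    [Algebra F E] [CommRing R] (ψ : AddChar F R) (ℓ : Module.Dual F E) {η : MulChar E R} {t : Fˣ}
    (ht : η (algebraMap F E t) = 1) :
    ∑ α : E, η α * ψ (t * ℓ α) = gaussSum η (ψ.compAddMonoidHom ℓ.toAddMonoidHom) := by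
  rw [← gaussSum_mulShift _ _ (Units.map (algebraMap F E) t)]
  simp [gaussSum, ht, ← Algebra.smul_def]

section Field

variable {F E : Type*} [Field F] [Fintype F] [DecidableEq F] [Field E] [Fintype E] [Algebra F E]

theorem kerCharSum_one (R : Type*) [CommRing R] {ℓ : Module.Dual F E} (hℓ : ℓ ≠ 0) {n : ℕ}
    (hE : Module.finrank F E = n + 1) :
    kerCharSum ℓ (1 : MulChar E R) = (Fintype.card F : R) ^ n - 1 := by
  have hker : Module.finrank F ℓ.ker = n := by
    have := Module.Dual.finrank_ker_add_one_of_ne_zero hℓ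
    omega
  classical
  have hcard : (Finset.univ.filter fun α ↦ ℓ α = 0).card = Fintype.card F ^ n := by
    rw [← hker, ← Nat.card_eq_fintype_card (α := F), ← Module.natCard_eq_pow_finrank,
      ← Fintype.card_subtype, ← Nat.card_eq_fintype_card]
    rfl
  have hmem : (0 : E) ∈ Finset.univ.filter fun α ↦ ℓ α = 0 := by simp
  have hone : ∀ α ∈ (Finset.univ.filter fun α ↦ ℓ α = 0).erase 0, (1 : MulChar E R) α = 1 :=
    fun α hα ↦ MulChar.one_apply (Finset.ne_of_mem_erase hα).isUnit
  rw [kerCharSum, ← Finset.add_sum_erase _ _ hmem, MulChar.map_zero, zero_add,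
    Finset.sum_congr rfl hone, Finset.sum_const, nsmul_one, Finset.cast_card_erase_of_mem hmem,
    hcard, Nat.cast_pow]

theorem card_mul_kerCharSum_eq_gaussSum {R : Type*} [CommRing R] [IsDomain R] {ψ : AddChar F R}
    (hψ : ψ.IsPrimitive) (ℓ : Module.Dual F E) {η : MulChar E R} (hη : η ≠ 1)
    (hηF : ∀ t : Fˣ, η (algebraMap F E t) = 1) :
    (Fintype.card F : R) * kerCharSum ℓ η =
      ((Fintype.card F : R) - 1) * gaussSum η (ψ.compAddMonoidHom ℓ.toAddMonoidHom) := by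
  rw [card_mul_kerCharSum_eq_sum hψ, ← Finset.add_sum_erase _ _ (Finset.mem_univ 0)]
  have hzero : ∑ α : E, η α * ψ (0 * ℓ α) = 0 := by
    simpa using MulChar.sum_eq_zero_of_ne_one hη
  have hne : ∀ t ∈ Finset.univ.erase (0 : F), ∑ α : E, η α * ψ (t * ℓ α) =
      gaussSum η (ψ.compAddMonoidHom ℓ.toAddMonoidHom) := fun t ht ↦
    sum_mul_addChar_unit_mul ψ ℓ (hηF (Units.mk0 t (Finset.ne_of_mem_erase ht)))
  rw [hzero, zero_add, Finset.sum_congr rfl hne, Finset.sum_const, nsmul_eq_mul,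
    Finset.cast_card_erase_of_mem (Finset.mem_univ _), Finset.card_univ]

theorem card_mul_norm_kerCharSum {ℓ : Module.Dual F E} (hℓ : ℓ ≠ 0) {η : MulChar E ℂ} (hη : η ≠ 1)
    (hηF : ∀ t : Fˣ, η (algebraMap F E t) = 1) :
    Fintype.card F * ‖kerCharSum ℓ η‖ = (Fintype.card F - 1) * √(Fintype.card E) := by
  obtain ⟨ψ, hψ⟩ := AddChar.exists_apply_ne_zero.2 (one_ne_zero (α := F))
  have hψ1 : ψ ≠ 1 := AddChar.ne_one_iff.2 ⟨1, hψ⟩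
  have hψℓ : ψ.compAddMonoidHom ℓ.toAddMonoidHom ≠ 1 := by
    obtain ⟨α, hα⟩ := LinearMap.surjective hℓ 1
    exact AddChar.ne_one_iff.2 ⟨α, by simpa [hα] using hψ⟩
  have h := congrArg norm (card_mul_kerCharSum_eq_gaussSum (.of_ne_one hψ1) ℓ hη hηF)
  rwa [norm_mul, norm_mul, norm_gaussSum_eq_sqrt_card hη (.of_ne_one hψℓ), Complex.norm_natCast,
    ← Nat.cast_pred Fintype.card_pos, Complex.norm_natCast, Nat.cast_pred Fintype.card_pos] at h

theorem norm_kerCharSum_mulCharComap_norm {ℓ : Module.Dual F E} (hℓ : ℓ ≠ 0)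
    {χ : MulChar F ℂ} (hχ : χ ≠ 1) (hχm : χ ^ Module.finrank F E = 1) :
    ‖kerCharSum ℓ (mulCharComap (Algebra.norm F) χ)‖ =
      (Fintype.card F - 1) * (√(Fintype.card E) / Fintype.card F) := by
  have hF : (Fintype.card F : ℝ) ≠ 0 := Nat.cast_ne_zero.2 Fintype.card_ne_zero
  rw [← mul_div_assoc, eq_div_iff hF, mul_comm]
  refine card_mul_norm_kerCharSum hℓ (mulCharComap_norm_ne_one hχ) fun t ↦ ?_
  rw [mulCharComap_norm_algebraMap, hχm, MulChar.one_apply_coe]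

theorem card_sub_one_mul_card_ker_norm_eq_sum {R : Type*} [CommRing R] [IsDomain R]
    [HasEnoughRootsOfUnity R (Monoid.exponent Fˣ)] [Fintype (MulChar F R)]
    [DecidableEq (MulChar F R)] {ℓ : Module.Dual F E} (hℓ : ℓ ≠ 0) {n : ℕ}
    (hE : Module.finrank F E = n + 1) (b : Fˣ) :
    ((Fintype.card F : R) - 1) * Nat.card {α : E // ℓ α = 0 ∧ Algebra.norm F α = b} =
      (Fintype.card F : R) ^ n - 1 +
        ∑ χ ∈ (Finset.univ.filter fun χ : MulChar F R ↦ χ ^ Module.finrank F E = 1).erase 1,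
          χ ↑b⁻¹ * kerCharSum ℓ (mulCharComap (Algebra.norm F) χ) := by
  have hunits : (Nat.card Fˣ : R) = Fintype.card F - 1 := by
    rw [Nat.card_units, Nat.card_eq_fintype_card, Nat.cast_pred Fintype.card_pos]
  have hfourier : ((Fintype.card F : R) - 1) *
      Nat.card {α : E // ℓ α = 0 ∧ Algebra.norm F α = b} =
        ∑ χ : MulChar F R, χ ↑b⁻¹ * kerCharSum ℓ (mulCharComap (Algebra.norm F) χ) := by
    have := isLocalHom_algebraNorm F E
    rw [Nat.card_eq_fintype_card, Fintype.card_subtype, ← Finset.filter_filter, ← hunits,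
      card_units_mul_card_filter_eq]
    simp only [kerCharSum, mulCharComap_apply]
  have htorsion : ∑ χ ∈ Finset.univ.filter fun χ : MulChar F R ↦ χ ^ Module.finrank F E = 1,
      χ ↑b⁻¹ * kerCharSum ℓ (mulCharComap (Algebra.norm F) χ) =
        ∑ χ : MulChar F R, χ ↑b⁻¹ * kerCharSum ℓ (mulCharComap (Algebra.norm F) χ) :=
    Finset.sum_filter_of_ne fun χ _ hχ ↦
      not_imp_comm.1 (kerCharSum_mulCharComap_norm_eq_zero ℓ) (right_ne_zero_of_mul hχ)
  rw [hfourier, ← htorsion, ← Finset.add_sum_erase _ _ (a := 1) (by simp), map_one,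
    kerCharSum_one R hℓ hE, MulChar.one_apply_coe, one_mul]

end Field

theorem abs_card_sub_one_mul_card_ker_norm_sub_le {F E : Type*} [Field F] [Fintype F] [Field E]
    [Fintype E] [Algebra F E] {ℓ : Module.Dual F E} (hℓ : ℓ ≠ 0) {n : ℕ}
    (hE : Module.finrank F E = n + 1) (b : Fˣ) :
    |((Fintype.card F : ℝ) - 1) * Nat.card {α : E // ℓ α = 0 ∧ Algebra.norm F α = b} -
        ((Fintype.card F : ℝ) ^ n - 1)| ≤
      (((n + 1).gcd (Fintype.card F - 1) : ℝ) - 1) *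
        ((Fintype.card F - 1) * (√(Fintype.card E) / Fintype.card F)) := by
  classical
  have := Fintype.ofFinite (MulChar F ℂ)
  set T := (Finset.univ.filter fun χ : MulChar F ℂ ↦ χ ^ Module.finrank F E = 1).erase 1 with hT
  have hcard : (T.card : ℝ) = (n + 1).gcd (Fintype.card F - 1) - 1 := by
    rw [hT, Finset.cast_card_erase_of_mem (by simp), card_mulChar_pow_eq_one, hE, Nat.card_units,
      Nat.card_eq_fintype_card]
  have hterm : ∀ χ ∈ T, ‖χ ↑b⁻¹ * kerCharSum ℓ (mulCharComap (Algebra.norm F) χ)‖ ≤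
      (Fintype.card F - 1) * (√(Fintype.card E) / Fintype.card F) := fun χ hχ ↦ by
    obtain ⟨hχ1, hχm⟩ : χ ≠ 1 ∧ χ ^ Module.finrank F E = 1 := by simpa [hT] using hχ
    rw [norm_mul, norm_mulChar_apply_coe, one_mul, norm_kerCharSum_mulCharComap_norm hℓ hχ1 hχm]
  have hsum := norm_sum_le_of_le T hterm
  rw [← sub_eq_iff_eq_add'.2 (card_sub_one_mul_card_ker_norm_eq_sum (R := ℂ) hℓ hE b),
    Finset.sum_const, nsmul_eq_mul, hcard] at hsum
  exact_mod_cast hsum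

theorem sqrt_pow_succ_div_self {x : ℝ} (hx : 0 < x) (n : ℕ) :
    √(x ^ (n + 1)) / x = x ^ (((n : ℝ) - 1) / 2) := by
  rw [Real.sqrt_eq_rpow, ← Real.rpow_natCast_mul hx.le, ← Real.rpow_sub_one hx.ne']
  congr 1
  push_cast
  ring

theorem katz_bound_trace_zero_general (n : ℕ) {F E : Type*} [Field F] [Fintype F] [Field E]
    [Algebra F E] (hE : Module.finrank F E = n + 1) {ℓ : Module.Dual F E} (hℓ : ℓ ≠ 0)
    {b : F} (hb : b ≠ 0) :
    |(Nat.card {α : E // ℓ α = 0 ∧ Algebra.norm F α = b} : ℝ)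
        - ((Fintype.card F : ℝ) ^ n - 1) / ((Fintype.card F : ℝ) - 1)|
      ≤ (((n + 1).gcd (Fintype.card F - 1) : ℝ) - 1)
        * (Fintype.card F : ℝ) ^ (((n : ℝ) - 1) / 2) := by
  have := Module.finite_of_finrank_eq_succ hE
  have : Finite E := Module.finite_of_finite F
  have := Fintype.ofFinite E
  have hq : (0 : ℝ) < Fintype.card F := Nat.cast_pos.2 Fintype.card_pos
  have hq1 : (0 : ℝ) < (Fintype.card F : ℝ) - 1 :=
    sub_pos.2 (Nat.one_lt_cast.2 Fintype.one_lt_card)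
  have hbound := abs_card_sub_one_mul_card_ker_norm_sub_le hℓ hE (Units.mk0 b hb)
  rw [Module.card_eq_pow_finrank (K := F) (V := E), hE, Nat.cast_pow,
    sqrt_pow_succ_div_self hq] at hbound
  rw [sub_div' hq1.ne', mul_comm (Nat.card _ : ℝ), abs_div, abs_of_pos hq1, div_le_iff₀ hq1]
  exact hbound.trans_eq (by ring)

/-- For `b ∈ 𝔽_q^*`, `n ≥ 1` and `d = gcd(n+1, q−1)`,
`|N_{n+1}(0,b) − (q^n − 1)/(q−1)| ≤ (d−1)·q^{(n−1)/2}`. -/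
theorem katz_bound_trace_zero (q n : ℕ) (hn : 1 ≤ n)
    (F E : Type*) [Field F] [Fintype F] [Field E] [Fintype E] [Algebra F E]
    (hq : Fintype.card F = q) (hE : Module.finrank F E = n + 1)
    (b : F) (hb : b ≠ 0) (d : ℕ) (hd : d = Nat.gcd (n + 1) (q - 1)) :
    |(Nat.card {α : E // Algebra.trace F E α = 0 ∧ Algebra.norm F α = b} : ℝ)
        - ((q : ℝ) ^ n - 1) / ((q : ℝ) - 1)|
      ≤ ((d : ℝ) - 1) * (q : ℝ) ^ (((n : ℝ) - 1) / 2) := by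
  subst hq hd
  exact katz_bound_trace_zero_general n hE (Algebra.trace_ne_zero F E) hb
end

section
/- Let q be a prime power, let F_q be the finite field with q elements, let a, b be nonzero elements of F_q, let n ≥ 1 be an integer, and set u = b/a^{n+1}. Then N_{n+1}(a,b) = (q^n − 1)/(q−1) + (−1)^n · ( N(u) − ((q−1)^n − (−1)^n)/q ), an identity of rational numbers. -/
/-!
For a multiplicative character `χ` and an additive character `ψ` of `F`, not both trivial, the
Hasse–Davenport relation says that `-∑ α : E, χ (norm α) * ψ (trace α) = (-g) ^ [E : F]`, where `g`
is the Gauss sum of `χ` and `ψ`. Expanding the power of `g` into a sum over tuples, this says that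
the number of `α : E` with trace `s` and norm `v` differs, up to the sign `(-1) ^ n`, from the
number of `(n + 1)`-tuples with sum `s` and product `v` by a function of `(s, v)` on `F × Fˣ` that
is orthogonal to all nontrivial characters, hence constant; its value is its average. Scaling a
tuple by `a⁻¹` and eliminating one coordinate turns the tuples into points of the toric
hypersurface.

The relation itself comes from a completely multiplicative weight `l` on monic polynomials with
`∑ f, l f * T ^ deg f = 1 + g * T`: the sum over `E` is a coefficient of `T` times the logarithmic
derivative of this series, because the von Mangoldt function `Λ` of `F[X]` satisfies both
`∑_{h ∣ f} Λ h = deg f` and `Λ f = #{α : E | f is the field polynomial of α}` for `deg f = [E : F]`.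
-/

namespace HasseDavenport

open Finset.HasAntidiagonal (antidiagonal mem_antidiagonal)
open Polynomial UniqueFactorizationMonoid

noncomputable section

section Factorization

variable {K : Type*} [Field K] [DecidableEq K] {f g P : K[X]}

open Classical in
/-- The finite set of monic divisors of a nonzero polynomial, encoded as the products of the
sub-multisets of its normalized irreducible factors. -/
def monicDivisors (f : K[X]) : Finset K[X] :=
  (normalizedFactors f).powerset.toFinset.image Multiset.prod

theorem monic_of_mem_normalizedFactors (hP : P ∈ normalizedFactors f) : P.Monic := by
  rw [← normalize_normalized_factor P hP]
  exact monic_normalize (irreducible_of_normalized_factor P hP).ne_zero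

theorem mem_monicDivisors (hf : f ≠ 0) : g ∈ monicDivisors f ↔ g.Monic ∧ g ∣ f := by
  classical
  simp only [monicDivisors, Finset.mem_image, Multiset.mem_toFinset, Multiset.mem_powerset]
  constructor
  · rintro ⟨s, hs, rfl⟩
    refine ⟨?_, (Multiset.prod_dvd_prod_of_le hs).trans (prod_normalizedFactors hf).dvd⟩
    simpa using monic_multiset_prod_of_monic s id fun P hP ↦
      monic_of_mem_normalizedFactors (Multiset.mem_of_le hs hP)
  · rintro ⟨hg, hgf⟩
    refine ⟨normalizedFactors g,
      (dvd_iff_normalizedFactors_le_normalizedFactors hg.ne_zero hf).1 hgf, ?_⟩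
    rw [prod_normalizedFactors_eq hg.ne_zero, hg.normalize_eq_self]

open Classical in
/-- The von Mangoldt function of `K[X]`: `deg P` on a power `P ^ j` (`1 ≤ j`) of an irreducible
polynomial `P`, and `0` elsewhere. -/
def vonMangoldt (f : K[X]) : ℕ :=
  if IsPrimePow f then (radical f).natDegree else 0

theorem vonMangoldt_one : vonMangoldt (1 : K[X]) = 0 :=
  if_neg not_isPrimePow_one

theorem isPrimePow_and_radical_eq_iff (hg : g.Monic) :
    IsPrimePow g ∧ radical g = P ↔ (P.Monic ∧ Irreducible P) ∧ ∃ j ≠ 0, P ^ j = g := by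
  constructor
  · rintro ⟨⟨p, j, hp, hj, rfl⟩, rfl⟩
    rw [radical_pow_of_prime hp hj.ne']
    refine ⟨⟨monic_normalize hp.ne_zero, ?_⟩, j, hj.ne', ?_⟩
    · exact (normalize_associated p).symm.irreducible hp.irreducible
    · exact eq_of_monic_of_associated ((monic_normalize hp.ne_zero).pow j) hg
        (normalize_associated p).pow_pow
  · rintro ⟨⟨hPm, hPi⟩, j, hj, rfl⟩
    exact ⟨hPi.prime.isPrimePow.pow hj,
      (radical_pow_of_prime hPi.prime hj).trans hPm.normalize_eq_self⟩

theorem vonMangoldt_pow (hP : Irreducible P) {j : ℕ} (hj : j ≠ 0) :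
    vonMangoldt (P ^ j) = P.natDegree := by
  rw [vonMangoldt, if_pos (hP.prime.isPrimePow.pow hj), radical_pow_of_prime hP.prime hj]
  exact natDegree_eq_of_degree_eq degree_normalize

theorem pow_dvd_iff_le_count_normalizedFactors [DecidableEq K[X]] (hf : f ≠ 0) (hPm : P.Monic)
    (hPi : Irreducible P) {j : ℕ} : P ^ j ∣ f ↔ j ≤ (normalizedFactors f).count P := by
  rw [pow_dvd_iff_le_emultiplicity, emultiplicity_eq_count_normalizedFactors hPi hf,
    hPm.normalize_eq_self, Nat.cast_le]

open Classical in
theorem filter_monicDivisors_eq_image_pow (hf : f ≠ 0) (hPm : P.Monic) (hPi : Irreducible P) :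
    {g ∈ monicDivisors f | IsPrimePow g ∧ radical g = P} =
      (Finset.Icc 1 ((normalizedFactors f).count P)).image (P ^ ·) := by
  ext g
  simp only [Finset.mem_filter, mem_monicDivisors hf, Finset.mem_image, Finset.mem_Icc,
    ← pow_dvd_iff_le_count_normalizedFactors hf hPm hPi]
  constructor
  · rintro ⟨⟨hg, hgf⟩, hgP⟩
    obtain ⟨-, j, hj, rfl⟩ := (isPrimePow_and_radical_eq_iff hg).1 hgP
    exact ⟨j, ⟨Nat.one_le_iff_ne_zero.2 hj, hgf⟩, rfl⟩
  · rintro ⟨j, ⟨hj, hjf⟩, rfl⟩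
    exact ⟨⟨hPm.pow j, hjf⟩, (isPrimePow_and_radical_eq_iff (hPm.pow j)).2
      ⟨⟨hPm, hPi⟩, j, Nat.one_le_iff_ne_zero.1 hj, rfl⟩⟩

theorem sum_natDegree_normalizedFactors (hf : f ≠ 0) :
    ((normalizedFactors f).map natDegree).sum = f.natDegree := by
  rw [← natDegree_multiset_prod _ (zero_notMem_normalizedFactors f), prod_normalizedFactors_eq hf]
  exact natDegree_eq_of_degree_eq degree_normalize

theorem sum_monicDivisors_vonMangoldt (hf : f ≠ 0) :
    ∑ g ∈ monicDivisors f, vonMangoldt g = f.natDegree := by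
  classical
  have radical_mem : ∀ g ∈ {g ∈ monicDivisors f | IsPrimePow g},
      radical g ∈ (normalizedFactors f).toFinset := fun g hg ↦ by
    rw [Finset.mem_filter, mem_monicDivisors hf] at hg
    obtain ⟨⟨hm, hi⟩, -⟩ := (isPrimePow_and_radical_eq_iff hg.1.1).1 ⟨hg.2, rfl⟩
    rw [Multiset.mem_toFinset, mem_normalizedFactors_iff' hf]
    exact ⟨hi, hm.normalize_eq_self, radical_dvd_self.trans hg.1.2⟩
  simp only [vonMangoldt]
  rw [← Finset.sum_filter, ← Finset.sum_fiberwise_of_maps_to radical_mem,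
    ← sum_natDegree_normalizedFactors hf, Finset.sum_multiset_map_count]
  refine Finset.sum_congr rfl fun P mem_toFinset ↦ ?_
  have hP := Multiset.mem_toFinset.1 mem_toFinset
  have hPi := irreducible_of_normalized_factor P hP
  rw [Finset.sum_congr rfl fun g hg ↦ by rw [(Finset.mem_filter.1 hg).2], Finset.sum_const,
    Finset.filter_filter,
    filter_monicDivisors_eq_image_pow hf (monic_of_mem_normalizedFactors hP) hPi,
    Finset.card_image_of_injective _ (pow_injective_of_not_isUnit hPi.not_isUnit hPi.ne_zero),
    Nat.card_Icc, Nat.add_sub_cancel]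

end Factorization

section MonicsOfDegree

variable (F : Type*) [Field F]

/-- Monic polynomials of degree `d` are parametrized by their coefficients of `X ^ i`, `i < d`. -/
def monicEquivCoeffs (d : ℕ) : {f : F[X] // f.Monic ∧ f.natDegree = d} ≃ (Fin d → F) :=
  (monicEquivDegreeLT d).trans (degreeLTEquiv F d).toEquiv

variable {F} in
theorem monicEquivCoeffs_apply {d : ℕ} (f : {f : F[X] // f.Monic ∧ f.natDegree = d}) (i : Fin d) :
    monicEquivCoeffs F d f i = f.1.coeff i :=
  eraseLead_coeff_of_ne i (by rw [f.2.2]; exact i.is_lt.ne)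

variable [Fintype F]

/-- The finite set of monic polynomials of degree `d` over a finite field. -/
def monicsOfDegree (d : ℕ) : Finset F[X] :=
  (Finset.univ : Finset (Fin d → F)).map
    ((monicEquivCoeffs F d).symm.toEmbedding.trans (Function.Embedding.subtype _))

variable {F} {R : Type*} [AddCommMonoid R] {d : ℕ}

theorem mem_monicsOfDegree {f : F[X]} : f ∈ monicsOfDegree F d ↔ f.Monic ∧ f.natDegree = d := by
  simp only [monicsOfDegree, Finset.mem_map, Finset.mem_univ, true_and]
  constructor
  · rintro ⟨c, rfl⟩
    exact ((monicEquivCoeffs F d).symm c).2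
  · exact fun hf ↦ ⟨monicEquivCoeffs F d ⟨f, hf⟩, by simp⟩

theorem sum_monicsOfDegree (φ : (Fin d → F) → R) :
    ∑ f ∈ monicsOfDegree F d, φ (fun i ↦ f.coeff i) = ∑ c, φ c := by
  rw [monicsOfDegree, Finset.sum_map]
  refine Finset.sum_congr rfl fun c _ ↦ congrArg φ (funext fun i ↦ ?_)
  exact (monicEquivCoeffs_apply _ i).symm.trans <|
    congrFun ((monicEquivCoeffs F d).apply_symm_apply c) i

theorem monicsOfDegree_zero : monicsOfDegree F 0 = {1} := by
  ext f
  rw [mem_monicsOfDegree, Finset.mem_singleton]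
  exact ⟨fun hf ↦ hf.1.natDegree_eq_zero.1 hf.2, by rintro rfl; simp⟩

theorem sum_monicsOfDegree_one (φ : F → F → R) :
    ∑ f ∈ monicsOfDegree F 1, φ f.nextCoeff (f.coeff 0) = ∑ s, φ s s := by
  rw [← (Equiv.funUnique (Fin 1) F).sum_comp, ← sum_monicsOfDegree]
  refine Finset.sum_congr rfl fun f hf ↦ ?_
  rw [nextCoeff_of_natDegree_pos (by rw [(mem_monicsOfDegree.1 hf).2]; exact one_pos),
    (mem_monicsOfDegree.1 hf).2]
  rfl

theorem sum_monicsOfDegree_add_two (φ : F → F → R) (k : ℕ) :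
    ∑ f ∈ monicsOfDegree F (k + 2), φ f.nextCoeff (f.coeff 0) =
      Fintype.card F ^ k • ∑ s, ∑ t, φ s t := by
  calc ∑ f ∈ monicsOfDegree F (k + 2), φ f.nextCoeff (f.coeff 0)
      = ∑ c : Fin (k + 2) → F, φ (c (Fin.last (k + 1))) (c 0) := by
        rw [← sum_monicsOfDegree]
        refine Finset.sum_congr rfl fun f hf ↦ ?_
        rw [nextCoeff_of_natDegree_pos (by rw [(mem_monicsOfDegree.1 hf).2]; omega),
          (mem_monicsOfDegree.1 hf).2]
        rfl
    _ = ∑ s, ∑ t, ∑ _c : Fin k → F, φ s t := by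
        rw [← (Fin.snocEquiv fun _ ↦ F).sum_comp, Fintype.sum_prod_type]
        refine Finset.sum_congr rfl fun s _ ↦ ?_
        rw [← (Fin.consEquiv fun _ ↦ F).sum_comp, Fintype.sum_prod_type]
        simp [Fin.snocEquiv, Fin.consEquiv]
    _ = Fintype.card F ^ k • ∑ s, ∑ t, φ s t := by
        simp [Finset.smul_sum]

theorem sum_sum_monicDivisors [DecidableEq F] (φ : F[X] → F[X] → R) (m : ℕ) :
    ∑ f ∈ monicsOfDegree F m, ∑ g ∈ monicDivisors f, φ g (f / g) =
      ∑ p ∈ antidiagonal m, ∑ g ∈ monicsOfDegree F p.1, ∑ h ∈ monicsOfDegree F p.2,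
        φ g h := by
  simp only [← Finset.sum_product']
  rw [Finset.sum_sigma', Finset.sum_sigma']
  have mem_monicDivisors_iff (f) (hf : f ∈ monicsOfDegree F m) (g) :
      g ∈ monicDivisors f ↔ g.Monic ∧ g ∣ f :=
    mem_monicDivisors (mem_monicsOfDegree.1 hf).1.ne_zero
  refine Finset.sum_bij' (fun x _ ↦ ⟨(x.2.natDegree, (x.1 / x.2).natDegree), x.2, x.1 / x.2⟩)
    (fun y _ ↦ ⟨y.2.1 * y.2.2, y.2.1⟩) ?_ ?_ ?_ ?_ ?_
  · rintro ⟨f, g⟩ hfg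
    obtain ⟨hf, hgf⟩ := Finset.mem_sigma.1 hfg
    obtain ⟨hg, h, rfl⟩ := (mem_monicDivisors_iff f hf g).1 hgf
    obtain ⟨hgh, hm⟩ := mem_monicsOfDegree.1 hf
    have hh := hg.of_mul_monic_left hgh
    simp [mem_monicsOfDegree, hg.ne_zero, hg, hh, ← hm, hg.natDegree_mul hh]
  · rintro ⟨⟨i, j⟩, g, h⟩ hgh
    simp only [Finset.mem_sigma, Finset.mem_product, mem_monicsOfDegree, mem_antidiagonal] at hgh ⊢
    obtain ⟨hij, ⟨hg, rfl⟩, hh, rfl⟩ := hgh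
    rw [mem_monicDivisors (hg.mul hh).ne_zero]
    exact ⟨⟨hg.mul hh, (hg.natDegree_mul hh).trans hij⟩, hg, dvd_mul_right g h⟩
  · rintro ⟨f, g⟩ hfg
    obtain ⟨hf, hgf⟩ := Finset.mem_sigma.1 hfg
    obtain ⟨hg, hdvd⟩ := (mem_monicDivisors_iff f hf g).1 hgf
    simp [EuclideanDomain.mul_div_cancel' hg.ne_zero hdvd]
  · rintro ⟨⟨i, j⟩, g, h⟩ hgh
    simp only [Finset.mem_sigma, Finset.mem_product, mem_monicsOfDegree] at hgh
    obtain ⟨-, ⟨hg, rfl⟩, -, rfl⟩ := hgh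
    simp [hg.ne_zero]
  · intros; rfl

end MonicsOfDegree

section Newton

variable {F R : Type*} [Field F] [Fintype F] {l : F[X] → R}

theorem natCast_mul_sum_monicsOfDegree [DecidableEq F] [CommSemiring R]
    (hl : ∀ g h, g.Monic → h.Monic → l (g * h) = l g * l h) (m : ℕ) :
    m * ∑ f ∈ monicsOfDegree F m, l f =
      ∑ p ∈ antidiagonal m, (∑ g ∈ monicsOfDegree F p.1, vonMangoldt g * l g) *
        ∑ h ∈ monicsOfDegree F p.2, l h := by
  calc m * ∑ f ∈ monicsOfDegree F m, l f
      = ∑ f ∈ monicsOfDegree F m, ∑ g ∈ monicDivisors f, vonMangoldt g * l (g * (f / g)) := by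
        rw [Finset.mul_sum]
        refine Finset.sum_congr rfl fun f hf ↦ ?_
        obtain ⟨hfm, rfl⟩ := mem_monicsOfDegree.1 hf
        rw [← sum_monicDivisors_vonMangoldt hfm.ne_zero, Nat.cast_sum, Finset.sum_mul]
        refine Finset.sum_congr rfl fun g hg ↦ ?_
        obtain ⟨hgm, hgf⟩ := (mem_monicDivisors hfm.ne_zero).1 hg
        rw [EuclideanDomain.mul_div_cancel' hgm.ne_zero hgf]
    _ = ∑ p ∈ antidiagonal m, ∑ g ∈ monicsOfDegree F p.1, ∑ h ∈ monicsOfDegree F p.2,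
          vonMangoldt g * l (g * h) :=
        sum_sum_monicDivisors (fun g h ↦ vonMangoldt g * l (g * h)) m
    _ = _ := by
        refine Finset.sum_congr rfl fun p _ ↦ ?_
        rw [Finset.sum_mul_sum]
        refine Finset.sum_congr rfl fun g hg ↦ Finset.sum_congr rfl fun h hh ↦ ?_
        rw [hl g h (mem_monicsOfDegree.1 hg).1 (mem_monicsOfDegree.1 hh).1, mul_assoc]

theorem neg_sum_vonMangoldt_mul_eq_pow [DecidableEq F] [CommRing R]
    (hl : ∀ g h, g.Monic → h.Monic → l (g * h) = l g * l h) (hl_one : l 1 = 1)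
    (hl_sum : ∀ k, ∑ f ∈ monicsOfDegree F (k + 2), l f = 0) (m : ℕ) :
    -∑ g ∈ monicsOfDegree F (m + 1), vonMangoldt g * l g =
      (-∑ f ∈ monicsOfDegree F 1, l f) ^ (m + 1) := by
  induction m with
  | zero =>
    have newton := natCast_mul_sum_monicsOfDegree hl 1
    simp only [Finset.Nat.sum_antidiagonal_succ', Finset.Nat.antidiagonal_zero, zero_add,
      Finset.sum_singleton, monicsOfDegree_zero, vonMangoldt_one, hl_one, Nat.cast_zero,
      Nat.cast_one, zero_mul, add_zero, one_mul, mul_one] at newton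
    rw [zero_add, pow_one, newton]
  | succ m ih =>
    have newton := natCast_mul_sum_monicsOfDegree hl (m + 2)
    simp only [Finset.Nat.sum_antidiagonal_succ', hl_sum, monicsOfDegree_zero, zero_add,
      Finset.sum_singleton, hl_one, mul_zero, mul_one, Finset.sum_const_zero, add_zero] at newton
    rw [pow_succ, ← ih]
    linear_combination newton

end Newton

section FieldPolynomial

open IntermediateField Module

variable {F E : Type*} [Field F] [Field E] [Algebra F E]

variable (F) in
/-- The field polynomial of `α : E` over `F`, that is, the characteristic polynomial of
multiplication by `α` on `E`, encoded as a power of the minimal polynomial. -/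
def fieldPolynomial (α : E) : F[X] :=
  minpoly F α ^ finrank F⟮α⟯ E

theorem nextCoeff_fieldPolynomial [FiniteDimensional F E] (α : E) :
    (fieldPolynomial F α).nextCoeff = -Algebra.trace F E α := by
  rw [fieldPolynomial, (minpoly.monic (.of_finite F α)).nextCoeff_pow,
    trace_eq_finrank_mul_minpoly_nextCoeff, nsmul_eq_mul, mul_neg, neg_neg]

theorem monic_fieldPolynomial [FiniteDimensional F E] (α : E) : (fieldPolynomial F α).Monic :=
  (minpoly.monic (.of_finite F α)).pow _

theorem natDegree_fieldPolynomial [FiniteDimensional F E] (α : E) :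
    (fieldPolynomial F α).natDegree = finrank F E := by
  rw [fieldPolynomial, natDegree_pow, ← adjoin.finrank (.of_finite F α), mul_comm,
    finrank_mul_finrank]

theorem neg_one_pow_mul_coeff_zero_fieldPolynomial [FiniteDimensional F E] (α : E) :
    (-1) ^ finrank F E * (fieldPolynomial F α).coeff 0 = Algebra.norm F α := by
  have hα : IsIntegral F α := .of_finite F α
  have norm_gen := Algebra.PowerBasis.norm_gen_eq_coeff_zero_minpoly (adjoin.powerBasis hα)
  rw [adjoin.powerBasis_gen, adjoin.powerBasis_dim, minpoly_gen] at norm_gen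
  rw [Algebra.norm_eq_norm_adjoin, norm_gen, mul_pow, ← pow_mul, ← adjoin.finrank hα,
    finrank_mul_finrank, fieldPolynomial, coeff_zero_eq_eval_zero, eval_pow,
    ← coeff_zero_eq_eval_zero]

theorem fieldPolynomial_eq_pow_iff [FiniteDimensional F E] {P : F[X]} (hPm : P.Monic)
    (hPi : Irreducible P) {j : ℕ} (hj : j ≠ 0) (hdeg : (P ^ j).natDegree = finrank F E) (α : E) :
    fieldPolynomial F α = P ^ j ↔ minpoly F α = P := by
  classical
  have hα : IsIntegral F α := .of_finite F α
  constructor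
  · intro h
    have radical_fieldPolynomial : radical (fieldPolynomial F α) = minpoly F α :=
      ((isPrimePow_and_radical_eq_iff (monic_fieldPolynomial α)).2
        ⟨⟨minpoly.monic hα, minpoly.irreducible hα⟩, _, finrank_pos.ne', rfl⟩).2
    rw [← radical_fieldPolynomial, h]
    exact ((isPrimePow_and_radical_eq_iff (hPm.pow j)).2 ⟨⟨hPm, hPi⟩, j, hj, rfl⟩).2
  · rintro rfl
    rw [fieldPolynomial]
    congr 1
    rw [natDegree_pow, ← adjoin.finrank hα, ← finrank_mul_finrank F F⟮α⟯ E, mul_comm] at hdeg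
    exact (Nat.eq_of_mul_eq_mul_left finrank_pos hdeg).symm

section Finite

variable [Fintype E]

theorem card_minpoly_eq [Finite F] [DecidableEq F] {P : F[X]} (hPm : P.Monic) (hPi : Irreducible P)
    (hdvd : P.natDegree ∣ finrank F E) :
    Fintype.card {α : E // minpoly F α = P} = P.natDegree := by
  classical
  have hX : P ∣ X ^ Fintype.card E - X := by
    rw [← Nat.card_eq_fintype_card, Module.natCard_eq_pow_finrank (K := F)]
    exact hPi.natDegree_dvd_iff_dvd_X_pow_card_pow_sub_X.1 hdvd
  have splits : (P.map (algebraMap F E)).Splits :=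
    (FiniteField.isSplittingField_sub E F).splits.of_dvd
      (map_ne_zero (FiniteField.X_pow_card_sub_X_ne_zero _ Fintype.one_lt_card))
      (map_dvd (algebraMap F E) hX)
  rw [← card_rootSet_eq_natDegree (PerfectField.separable_of_irreducible hPi) splits]
  refine Fintype.card_congr (Equiv.subtypeEquivRight fun α ↦ ?_)
  rw [mem_rootSet_of_ne hPi.ne_zero]
  exact ⟨fun h ↦ h ▸ minpoly.aeval F α,
    fun h ↦ (minpoly.eq_of_irreducible_of_monic hPi h hPm).symm⟩

variable [Fintype F]

theorem card_fieldPolynomial_eq [DecidableEq F] {g : F[X]}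
    (hg : g ∈ monicsOfDegree F (finrank F E)) :
    Fintype.card {α : E // fieldPolynomial F α = g} = vonMangoldt g := by
  obtain ⟨hgm, hdeg⟩ := mem_monicsOfDegree.1 hg
  by_cases hpow : IsPrimePow g
  · obtain ⟨⟨hPm, hPi⟩, j, hj, hgP⟩ := (isPrimePow_and_radical_eq_iff hgm).1 ⟨hpow, rfl⟩
    rw [vonMangoldt, if_pos hpow, ← card_minpoly_eq (E := E) hPm hPi]
    · rw [← hgP] at hdeg
      simp_rw [← fieldPolynomial_eq_pow_iff hPm hPi hj hdeg, hgP]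
    · exact Dvd.intro_left j (by rw [← natDegree_pow, hgP, hdeg])
  · rw [vonMangoldt, if_neg hpow, Fintype.card_eq_zero_iff]
    refine ⟨fun ⟨α, hα⟩ ↦ hpow ?_⟩
    rw [← hα]
    exact (minpoly.irreducible (.of_finite F α)).prime.isPrimePow.pow finrank_pos.ne'

theorem sum_fieldPolynomial [DecidableEq F] {R : Type*} [Semiring R] (l : F[X] → R) :
    ∑ α : E, l (fieldPolynomial F α) =
      ∑ g ∈ monicsOfDegree F (finrank F E), vonMangoldt g * l g := by
  have mem_monics (α : E) : fieldPolynomial F α ∈ monicsOfDegree F (finrank F E) :=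
    mem_monicsOfDegree.2 ⟨monic_fieldPolynomial α, natDegree_fieldPolynomial α⟩
  rw [← Finset.sum_fiberwise_of_maps_to fun α _ ↦ mem_monics α]
  refine Finset.sum_congr rfl fun g hg ↦ ?_
  rw [← card_fieldPolynomial_eq hg, Fintype.card_subtype, ← nsmul_eq_mul, ← Finset.sum_const]
  exact Finset.sum_congr rfl fun α hα ↦ by rw [(Finset.mem_filter.1 hα).2]

end Finite

end FieldPolynomial

section CharacterSums

variable {F R : Type*} [Field F] [CommRing R] (χ : MulChar F R) (ψ : AddChar F R)

/-- The completely multiplicative function `f ↦ ψ (s) χ (p)` on monic polynomials, where `s` and `p`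
are the sum and the product of the roots of `f`, read off from its coefficients. -/
def characterWeight (f : F[X]) : R :=
  ψ (-f.nextCoeff) * χ ((-1) ^ f.natDegree * f.coeff 0)

theorem characterWeight_one : characterWeight χ ψ 1 = 1 := by
  have nextCoeff_one : (1 : F[X]).nextCoeff = 0 := nextCoeff_C_eq_zero 1
  simp [characterWeight, nextCoeff_one]

theorem characterWeight_mul {g h : F[X]} (hg : g.Monic) (hh : h.Monic) :
    characterWeight χ ψ (g * h) = characterWeight χ ψ g * characterWeight χ ψ h := by
  simp only [characterWeight, hg.nextCoeff_mul hh, hg.natDegree_mul hh, mul_coeff_zero, pow_add,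
    neg_add, AddChar.map_add_eq_mul, map_mul]
  ring

variable [Fintype F]

theorem sum_characterWeight_one :
    ∑ f ∈ monicsOfDegree F 1, characterWeight χ ψ f = gaussSum χ ψ := by
  calc ∑ f ∈ monicsOfDegree F 1, characterWeight χ ψ f
      = ∑ f ∈ monicsOfDegree F 1, ψ (-f.nextCoeff) * χ (-f.coeff 0) :=
        Finset.sum_congr rfl fun f hf ↦ by
          rw [characterWeight, (mem_monicsOfDegree.1 hf).2, pow_one, neg_one_mul]
    _ = ∑ s, ψ (-s) * χ (-s) := sum_monicsOfDegree_one fun s t ↦ ψ (-s) * χ (-t)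
    _ = ∑ s, ψ s * χ s := Equiv.sum_comp (.neg F) fun s ↦ ψ s * χ s
    _ = gaussSum χ ψ := Finset.sum_congr rfl fun s _ ↦ mul_comm _ _

theorem sum_characterWeight_add_two (k : ℕ) :
    ∑ f ∈ monicsOfDegree F (k + 2), characterWeight χ ψ f =
      Fintype.card F ^ k * ((∑ s, ψ s) * ∑ t, χ t) := by
  have hc : (-1 : F) ^ (k + 2) ≠ 0 := pow_ne_zero _ (neg_ne_zero.2 one_ne_zero)
  calc ∑ f ∈ monicsOfDegree F (k + 2), characterWeight χ ψ f
      = ∑ f ∈ monicsOfDegree F (k + 2), ψ (-f.nextCoeff) * χ ((-1) ^ (k + 2) * f.coeff 0) :=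
        Finset.sum_congr rfl fun f hf ↦ by rw [characterWeight, (mem_monicsOfDegree.1 hf).2]
    _ = Fintype.card F ^ k • ∑ s, ∑ t, ψ (-s) * χ ((-1) ^ (k + 2) * t) :=
        sum_monicsOfDegree_add_two (fun s t ↦ ψ (-s) * χ ((-1) ^ (k + 2) * t)) k
    _ = Fintype.card F ^ k * ((∑ s, ψ s) * ∑ t, χ t) := by
        rw [← Finset.sum_mul_sum, nsmul_eq_mul, Nat.cast_pow]
        congr 2
        · exact Equiv.sum_comp (.neg F) ψ
        · exact Equiv.sum_comp (.mulLeft₀ _ hc) χ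

variable {χ ψ} in
theorem neg_sum_norm_trace_eq_neg_gaussSum_pow {E : Type*} [Field E] [Fintype E] [Algebra F E]
    (h : (∑ s, ψ s) * ∑ t, χ t = 0) :
    -∑ α : E, χ (Algebra.norm F α) * ψ (Algebra.trace F E α) =
      (-gaussSum χ ψ) ^ Module.finrank F E := by
  classical
  obtain ⟨m, hm⟩ := Nat.exists_eq_add_one.2 (Module.finrank_pos (R := F) (M := E))
  have weight_fieldPolynomial (α : E) : characterWeight χ ψ (fieldPolynomial F α) =
      χ (Algebra.norm F α) * ψ (Algebra.trace F E α) := by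
    rw [characterWeight, nextCoeff_fieldPolynomial, neg_neg, natDegree_fieldPolynomial,
      neg_one_pow_mul_coeff_zero_fieldPolynomial, mul_comm]
  simp_rw [← weight_fieldPolynomial]
  rw [sum_fieldPolynomial, hm, ← sum_characterWeight_one]
  refine neg_sum_vonMangoldt_mul_eq_pow (fun _ _ ↦ characterWeight_mul χ ψ)
    (characterWeight_one χ ψ) (fun k ↦ ?_) m
  rw [sum_characterWeight_add_two, h, mul_zero]

theorem gaussSum_pow (m : ℕ) :
    gaussSum χ ψ ^ m = ∑ x : Fin m → F, χ (∏ i, x i) * ψ (∑ i, x i) := by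
  classical
  have ψ_sum (x : Fin m → F) : ψ (∑ i, x i) = ∏ i, ψ (x i) :=
    map_prod ψ.toMonoidHom (fun i ↦ Multiplicative.ofAdd (x i)) Finset.univ
  simp_rw [gaussSum, Fintype.sum_pow, Finset.prod_mul_distrib, map_prod, ψ_sum]

theorem sum_mulChar_one : ∑ a, (1 : MulChar F R) a = Fintype.card F - 1 := by
  classical
  rw [MulChar.sum_one_eq_card_units, Fintype.card_units, Nat.cast_sub Fintype.card_pos,
    Nat.cast_one]

theorem sum_card_fiber_mul [DecidableEq F] {ι : Type*} [Fintype ι] (s p : ι → F) :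
    ∑ g : F × Additive Fˣ,
        (Nat.card {i // s i = g.1 ∧ p i = g.2.toMul} : R) * (χ g.2.toMul * ψ g.1) =
      ∑ i, χ (p i) * ψ (s i) := by
  classical
  have summand (i : ι) :
      ∑ g : F × Additive Fˣ, (if s i = g.1 ∧ p i = g.2.toMul then χ g.2.toMul * ψ g.1 else 0) =
        χ (p i) * ψ (s i) := by
    by_cases hp : p i = 0
    · rw [hp, MulChar.map_zero, zero_mul]
      exact Finset.sum_eq_zero fun g _ ↦ if_neg fun h ↦ g.2.toMul.ne_zero h.2.symm
    · rw [Finset.sum_eq_single_of_mem (s i, .ofMul (Units.mk0 (p i) hp)) (Finset.mem_univ _)]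
      · simp
      · rintro ⟨t, v⟩ - hne
        refine if_neg fun h ↦ hne (Prod.ext h.1.symm ?_)
        exact congrArg Additive.ofMul (Units.ext h.2.symm)
  simp_rw [← summand]
  rw [Finset.sum_comm]
  refine Finset.sum_congr rfl fun g _ ↦ ?_
  rw [← Finset.sum_filter, Finset.sum_const, nsmul_eq_mul, Nat.card_eq_fintype_card,
    Fintype.card_subtype]

end CharacterSums

section Orthogonality

theorem card_mul_eq_sum_of_sum_mul_addChar_eq_zero {G : Type*} [AddCommGroup G] [Fintype G]
    {f : G → ℂ} (hf : ∀ Ψ : AddChar G ℂ, Ψ ≠ 1 → ∑ x, f x * Ψ x = 0) (y : G) :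
    Fintype.card G * f y = ∑ x, f x := by
  classical
  calc Fintype.card G * f y
      = ∑ x, f x * ∑ Ψ : AddChar G ℂ, Ψ (x - y) := by
        simp [AddChar.sum_apply_eq_ite, sub_eq_zero, mul_comm]
    _ = ∑ Ψ : AddChar G ℂ, (∑ x, f x * Ψ x) * Ψ (-y) := by
        simp_rw [Finset.mul_sum, Finset.sum_mul]
        rw [Finset.sum_comm]
        simp_rw [sub_eq_add_neg, AddChar.map_add_eq_mul, mul_assoc]
    _ = ∑ x, f x := by
        rw [Finset.sum_eq_single_of_mem 1 (Finset.mem_univ _)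
          fun Ψ _ hΨ ↦ by rw [hf Ψ hΨ, zero_mul]]
        simp

variable {F R : Type*} [Field F] [CommRing R]

theorem exists_mulChar_addChar_of_prod (Ψ : AddChar (F × Additive Fˣ) R) :
    ∃ (χ : MulChar F R) (ψ : AddChar F R), ∀ g, Ψ g = χ g.2.toMul * ψ g.1 := by
  let f : Fˣ →* R :=
    { toFun v := Ψ (0, .ofMul v)
      map_one' := Ψ.map_zero_eq_one
      map_mul' v w := by
        rw [← AddChar.map_add_eq_mul, Prod.mk_add_mk, add_zero, ofMul_mul] }
  refine ⟨.ofUnitHom f.toHomUnits, Ψ.compAddMonoidHom (.inl F (Additive Fˣ)), fun g ↦ ?_⟩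
  calc Ψ g = Ψ ((0, g.2) + (g.1, 0)) := by simp
    _ = Ψ (0, g.2) * Ψ (g.1, 0) := AddChar.map_add_eq_mul Ψ _ _
    _ = _ := by rw [MulChar.ofUnitHom_coe]; rfl

end Orthogonality

section Discrepancy

open Module

variable (F E R : Type*) [Field F] [Fintype F] [Field E] [Algebra F E] [CommRing R]

/-- The number of elements of `E` of trace `s` and norm `v`, compared with the number of
`[E : F]`-tuples over `F` of sum `s` and product `v`, as a function on the group `F × Fˣ` (written
additively) with the sign for which it is orthogonal to the nontrivial characters. -/
def traceNormDiscrepancy (g : F × Additive Fˣ) : R :=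
  Nat.card {α : E // Algebra.trace F E α = g.1 ∧ Algebra.norm F α = g.2.toMul} +
    (-1) ^ finrank F E *
      Nat.card {x : Fin (finrank F E) → F // ∑ i, x i = g.1 ∧ ∏ i, x i = g.2.toMul}

variable {R}

theorem sum_traceNormDiscrepancy_mul [Fintype E] [DecidableEq F] (χ : MulChar F R)
    (ψ : AddChar F R) :
    ∑ g, traceNormDiscrepancy F E R g * (χ g.2.toMul * ψ g.1) =
      ∑ α : E, χ (Algebra.norm F α) * ψ (Algebra.trace F E α) + (-gaussSum χ ψ) ^ finrank F E := by
  simp only [traceNormDiscrepancy, add_mul, mul_assoc, Finset.sum_add_distrib, ← Finset.mul_sum]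
  rw [sum_card_fiber_mul χ ψ (Algebra.trace F E) (Algebra.norm F),
    sum_card_fiber_mul χ ψ (fun x : Fin (finrank F E) → F ↦ ∑ i, x i) (fun x ↦ ∏ i, x i),
    neg_pow (gaussSum χ ψ), gaussSum_pow]

theorem sum_traceNormDiscrepancy_mul_addChar [Finite E] [DecidableEq F] [IsDomain R]
    {Ψ : AddChar (F × Additive Fˣ) R} (hΨ : Ψ ≠ 1) :
    ∑ g, traceNormDiscrepancy F E R g * Ψ g = 0 := by
  cases nonempty_fintype E
  obtain ⟨χ, ψ, hχψ⟩ := exists_mulChar_addChar_of_prod Ψ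
  have sums_eq_zero : (∑ s, ψ s) * ∑ t, χ t = 0 := by
    by_cases hψ : ψ = 1
    · have hχ : χ ≠ 1 := fun hχ ↦ hΨ <| DFunLike.ext _ _ fun g ↦ by simp [hχψ, hχ, hψ]
      rw [MulChar.sum_eq_zero_of_ne_one hχ, mul_zero]
    · rw [AddChar.sum_eq_zero_of_ne_one hψ, zero_mul]
  simp_rw [hχψ]
  rw [sum_traceNormDiscrepancy_mul, ← neg_sum_norm_trace_eq_neg_gaussSum_pow sums_eq_zero,
    add_neg_cancel]

theorem sum_traceNormDiscrepancy [Finite E] [DecidableEq F] :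
    ∑ g, traceNormDiscrepancy F E R g =
      Fintype.card F ^ finrank F E - 1 + (-(Fintype.card F - 1)) ^ finrank F E := by
  cases nonempty_fintype E
  calc ∑ g, traceNormDiscrepancy F E R g
      = ∑ g, traceNormDiscrepancy F E R g *
          ((1 : MulChar F R) g.2.toMul * (1 : AddChar F R) g.1) := by simp
    _ = ∑ α : E, (1 : MulChar E R) α + (-∑ a, (1 : MulChar F R) a) ^ finrank F E := by
        rw [sum_traceNormDiscrepancy_mul]
        congr 1
        · refine Finset.sum_congr rfl fun α _ ↦ ?_
          by_cases hα : α = 0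
          · simp [hα, MulChar.map_zero]
          · simp [hα, MulChar.one_apply]
        · simp [gaussSum]
    _ = _ := by
        rw [sum_mulChar_one, sum_mulChar_one, Module.card_eq_pow_finrank (K := F) (V := E),
          Nat.cast_pow]

theorem card_trace_norm_add_card_sum_prod [Finite E] (a : F) {b : F} (hb : b ≠ 0) :
    (Fintype.card F * (Fintype.card F - 1) *
      (Nat.card {α : E // Algebra.trace F E α = a ∧ Algebra.norm F α = b} + (-1) ^ finrank F E *
        Nat.card {x : Fin (finrank F E) → F // ∑ i, x i = a ∧ ∏ i, x i = b}) : ℚ) =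
      Fintype.card F ^ finrank F E - 1 + (-(Fintype.card F - 1)) ^ finrank F E := by
  classical
  have card_group : (Fintype.card (F × Additive Fˣ) : ℂ) =
      Fintype.card F * (Fintype.card F - 1) := by
    simp [Fintype.card_units, Nat.cast_sub Fintype.card_pos]
  have average := card_mul_eq_sum_of_sum_mul_addChar_eq_zero
    (fun Ψ ↦ sum_traceNormDiscrepancy_mul_addChar F E) (a, .ofMul (Units.mk0 b hb))
  rw [sum_traceNormDiscrepancy, card_group] at average
  simp only [traceNormDiscrepancy, toMul_ofMul, Units.val_mk0] at average
  exact_mod_cast average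

end Discrepancy

section Toric

variable {F : Type*} [Field F]

theorem card_sum_prod_mul {ι : Type*} [Fintype ι] {a : F} (ha : a ≠ 0) (s p : F) :
    Nat.card {x : ι → F // ∑ i, x i = a * s ∧ ∏ i, x i = a ^ Fintype.card ι * p} =
      Nat.card {x : ι → F // ∑ i, x i = s ∧ ∏ i, x i = p} :=
  .symm <| Nat.card_congr <| (Equiv.piCongrRight fun _ ↦ Equiv.mulLeft₀ a ha).subtypeEquiv
    fun x ↦ by simp [← Finset.mul_sum, Finset.prod_mul_distrib, ha]

theorem card_sum_prod_succ {u : F} (hu : u ≠ 0) (s : F) (n : ℕ) :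
    Nat.card {x : Fin (n + 1) → F // ∑ i, x i = s ∧ ∏ i, x i = u} =
      Nat.card {y : Fin n → F // (∀ i, y i ≠ 0) ∧ ∑ i, y i + u / ∏ i, y i = s} := by
  have prod_tail_ne_zero {x : Fin (n + 1) → F} (hx : ∏ i, x i = u) :
      ∏ i, Fin.tail x i ≠ 0 := fun h ↦ hu <| by
    rw [← hx, Fin.prod_univ_succ]; exact mul_eq_zero_of_right _ h
  have head_eq {x : Fin (n + 1) → F} (hx : ∏ i, x i = u) : u / ∏ i, Fin.tail x i = x 0 := by
    rw [div_eq_iff (prod_tail_ne_zero hx), ← hx, Fin.prod_univ_succ]; rfl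
  refine Nat.card_congr
    { toFun x := ⟨Fin.tail x.1,
        fun i ↦ Finset.prod_ne_zero_iff.1 (prod_tail_ne_zero x.2.2) i (Finset.mem_univ i), ?_⟩
      invFun y := ⟨Fin.cons (u / ∏ i, y.1 i) y.1, ?_, ?_⟩
      left_inv x := Subtype.ext ?_
      right_inv _ := rfl }
  · rw [head_eq x.2.2, add_comm]
    exact (Fin.sum_univ_succ x.1).symm.trans x.2.1
  · rw [Fin.sum_cons, add_comm, y.2.2]
  · rw [Fin.prod_cons, div_mul_cancel₀ _ (Finset.prod_ne_zero_iff.2 fun i _ ↦ y.2.1 i)]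
  · exact (congrArg (Fin.cons · _) (head_eq x.2.2)).trans (Fin.cons_self_tail x.1)

theorem card_sum_prod_eq_card_toric {a b : F} (ha : a ≠ 0) (hb : b ≠ 0) (n : ℕ) :
    Nat.card {x : Fin (n + 1) → F // ∑ i, x i = a ∧ ∏ i, x i = b} =
      Nat.card {y : Fin n → F //
        (∀ i, y i ≠ 0) ∧ ∑ i, y i + b / a ^ (n + 1) / ∏ i, y i = 1} := by
  have ha' : a ^ (n + 1) ≠ 0 := pow_ne_zero _ ha
  rw [← card_sum_prod_succ (div_ne_zero hb ha') 1, ← card_sum_prod_mul ha 1, mul_one,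
    Fintype.card_fin, mul_div_cancel₀ _ ha']

end Toric

end

end HasseDavenport

/-- **Lemma 2.1**: with `u = b/a^{n+1}`,
`N_{n+1}(a,b) = (q^n − 1)/(q−1) + (−1)^n (N(u) − ((q−1)^n − (−1)^n)/q)`,
where `N(u)` counts points on the toric hypersurface
`X_1 + ⋯ + X_n + u/(X_1⋯X_n) = 1`. -/
theorem trace_norm_count_eq_toric_count (q n : ℕ) (hn : 1 ≤ n)
    (F E : Type*) [Field F] [Fintype F] [Field E] [Fintype E] [Algebra F E]
    (hq : Fintype.card F = q) (hE : Module.finrank F E = n + 1)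
    (a b : F) (ha : a ≠ 0) (hb : b ≠ 0) (u : F) (hu : u = b / a ^ (n + 1)) :
    (Nat.card {α : E // Algebra.trace F E α = a ∧ Algebra.norm F α = b} : ℚ)
      = ((q : ℚ) ^ n - 1) / ((q : ℚ) - 1)
        + (-1) ^ n * ((Nat.card {x : Fin n → F // (∀ i, x i ≠ 0) ∧
              (∑ i, x i) + u / (∏ i, x i) = 1} : ℚ)
            - (((q : ℚ) - 1) ^ n - (-1) ^ n) / (q : ℚ)) := by
  classical
  have average := HasseDavenport.card_trace_norm_add_card_sum_prod F E a hb
  rw [hE, HasseDavenport.card_sum_prod_eq_card_toric ha hb, ← hu, hq] at average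
  have one_lt_q : (1 : ℚ) < q := by exact_mod_cast hq ▸ Fintype.one_lt_card (α := F)
  have q_ne_zero : (q : ℚ) ≠ 0 := by positivity
  have q_sub_one_ne_zero : (q : ℚ) - 1 ≠ 0 := sub_ne_zero.2 one_lt_q.ne'
  have sign_mul_self : ((-1 : ℚ) ^ n) * (-1) ^ n = 1 := by rw [← mul_pow]; simp
  refine mul_left_cancel₀ (mul_ne_zero q_ne_zero q_sub_one_ne_zero) ?_
  field_simp
  rw [neg_pow ((q : ℚ) - 1)] at average
  linear_combination average - ((q : ℚ) - 1) * sign_mul_self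
end

section
/- Let q be a prime power, let F_q be the finite field with q elements, let ℓ ≥ 3 be a prime, and let a, b be nonzero elements of F_q. Let R be the number of elements c ∈ F_q with ℓ·c = a and c^ℓ = b. Then R ∈ {0, 1} and N_ℓ(a,b) ≡ R (mod ℓ). -/
/-!
The Galois group of `E/F` has order `ℓ` and acts on the set of elements of `E` of trace `a` and
norm `b`. Its nontrivial orbits have size divisible by `ℓ`, so modulo `ℓ` only the fixed points
count; these are the `c ∈ F` of trace `ℓ * c = a` and norm `c ^ ℓ = b`. At most one such `c` exists:
either `ℓ` is invertible in `F` and the trace determines `c`, or `F` has characteristic `ℓ` and the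
norm determines it, since Frobenius is injective.
-/

open Module MulAction

theorem eq_of_prime_pow_mul_eq_of_pow_prime_pow_eq {R : Type*} [CommRing R] [IsDomain R]
    {p n : ℕ} (hp : p.Prime) {c d : R} (hmul : ((p ^ n : ℕ) : R) * c = ((p ^ n : ℕ) : R) * d)
    (hpow : c ^ p ^ n = d ^ p ^ n) : c = d := by
  by_cases hpR : (p : R) = 0
  · have : CharP R p := (CharP.charP_iff_prime_eq_zero hp).mpr hpR
    have : ExpChar R p := .prime hp
    exact iterateFrobenius_inj R p n hpow
  · have hpn : ((p ^ n : ℕ) : R) ≠ 0 := by simpa only [Nat.cast_pow] using pow_ne_zero n hpR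
    exact mul_left_cancel₀ hpn hmul

theorem natCard_subMulAction_modEq_natCard_inter_fixedPoints {p : ℕ} [Fact p.Prime]
    {G α : Type*} [Group G] [MulAction G α] (hG : IsPGroup p G) (S : SubMulAction G α) [Finite S] :
    Nat.card S ≡ Nat.card ((S : Set α) ∩ fixedPoints G α : Set α) [MOD p] := by
  have hfixed : fixedPoints G S = ((↑) : S → α) ⁻¹' fixedPoints G α := by
    ext x
    simp only [Set.mem_preimage, mem_fixedPoints, Subtype.ext_iff, SubMulAction.val_smul]
  have himage : ((↑) : S → α) '' fixedPoints G S = (S : Set α) ∩ fixedPoints G α := by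
    rw [hfixed]
    exact Subtype.image_preimage_coe _ _
  rw [← himage, Nat.card_image_of_injective Subtype.val_injective]
  exact hG.card_modEq_card_fixedPoints S

theorem range_algebraMap_eq_fixedPoints (A B G : Type*) [CommSemiring A] [Semiring B] [Algebra A B]
    [Group G] [MulSemiringAction G B] [SMulCommClass G A B] [Algebra.IsInvariant A B G] :
    Set.range (algebraMap A B) = fixedPoints G B := by
  ext x
  constructor
  · rintro ⟨a, rfl⟩ g
    exact smul_algebraMap g a
  · exact Algebra.IsInvariant.isInvariant x

theorem natCard_subMulAction_modEq_natCard_preimage_algebraMap {p : ℕ} [Fact p.Prime]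
    (A : Type*) {B G : Type*} [CommSemiring A] [Semiring B] [Algebra A B] [FaithfulSMul A B]
    [Group G] [MulSemiringAction G B] [SMulCommClass G A B] [Algebra.IsInvariant A B G]
    (hG : IsPGroup p G) (S : SubMulAction G B) [Finite S] :
    Nat.card S ≡ Nat.card (algebraMap A B ⁻¹' S) [MOD p] := by
  have hcard : Nat.card (algebraMap A B ⁻¹' S) =
      Nat.card ((S : Set B) ∩ fixedPoints G B : Set B) := by
    rw [← range_algebraMap_eq_fixedPoints A B G, ← Set.image_preimage_eq_inter_range,
      Nat.card_image_of_injective (FaithfulSMul.algebraMap_injective A B)]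
  exact hcard ▸ natCard_subMulAction_modEq_natCard_inter_fixedPoints hG S

section TraceNormFiber

variable {R : Type*} (S : Type*) [CommRing R] [CommRing S] [Algebra R S]

/-- The fiber over `(a, b)` of the pair (trace, norm) on an `R`-algebra `S`, whose cardinality is
`N_m(a, b)` when `S/R` is the extension `F_{q^m}/F_q`. It is bundled with its stability under
`R`-automorphisms of `S`, so that the group of these automorphisms acts on it. -/
def traceNormFiber (a b : R) : SubMulAction (S ≃ₐ[R] S) S where
  carrier := {x | Algebra.trace R S x = a ∧ Algebra.norm R x = b}
  smul_mem' σ x hx := by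
    simpa only [Set.mem_ofPred_eq, AlgEquiv.smul_def, Algebra.trace_eq_of_algEquiv,
      Algebra.norm_eq_of_algEquiv] using hx

theorem preimage_algebraMap_traceNormFiber [StrongRankCondition R] [Module.Free R S] (a b : R) :
    algebraMap R S ⁻¹' traceNormFiber S a b =
      {c | (finrank R S : R) * c = a ∧ c ^ finrank R S = b} := by
  ext c
  change Algebra.trace R S (algebraMap R S c) = a ∧ Algebra.norm R (algebraMap R S c) = b ↔ _
  rw [Algebra.trace_algebraMap, Algebra.norm_algebraMap, nsmul_eq_mul, Set.mem_ofPred_eq]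

end TraceNormFiber

theorem trace_norm_count_mod_prime_general {p n : ℕ} (hp : p.Prime) {F E : Type*} [Field F]
    [Field E] [Algebra F E] [IsGalois F E] (hE : finrank F E = p ^ n) (a b : F)
    [hfin : Finite {α : E // Algebra.trace F E α = a ∧ Algebra.norm F α = b}] :
    Nat.card {c : F // (finrank F E : F) * c = a ∧ c ^ finrank F E = b} ≤ 1 ∧
      Nat.card {α : E // Algebra.trace F E α = a ∧ Algebra.norm F α = b} ≡
        Nat.card {c : F // (finrank F E : F) * c = a ∧ c ^ finrank F E = b} [MOD p] := by
  constructor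
  · have : Subsingleton {c : F // (finrank F E : F) * c = a ∧ c ^ finrank F E = b} := by
      rw [hE]
      exact ⟨fun c d ↦ Subtype.ext <| eq_of_prime_pow_mul_eq_of_pow_prime_pow_eq hp
        (c.2.1.trans d.2.1.symm) (c.2.2.trans d.2.2.symm)⟩
    exact Finite.card_le_one_iff_subsingleton.mpr this
  · have : Fact p.Prime := ⟨hp⟩
    have : FiniteDimensional F E := finite_of_finrank_pos (hE ▸ pow_pos hp.pos n)
    have hG : IsPGroup p (E ≃ₐ[F] E) :=
      .of_card ((IsGalois.card_aut_eq_finrank F E).trans hE)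
    have : Finite (traceNormFiber E a b) := hfin
    have hmod := natCard_subMulAction_modEq_natCard_preimage_algebraMap F hG (traceNormFiber E a b)
    rwa [preimage_algebraMap_traceNormFiber] at hmod

/-- For a prime `ℓ ≥ 3` and `a, b ∈ 𝔽_q^*`, if `R` is the number of `c ∈ 𝔽_q` with
`ℓc = a` and `c^ℓ = b`, then `R ∈ {0,1}` and `N_ℓ(a,b) ≡ R (mod ℓ)`. -/
theorem trace_norm_count_mod_prime (q ℓ : ℕ) (hℓ : ℓ.Prime) (hℓ3 : 3 ≤ ℓ)
    (F E : Type*) [Field F] [Fintype F] [Field E] [Fintype E] [Algebra F E]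
    (hq : Fintype.card F = q) (hE : Module.finrank F E = ℓ)
    (a b : F) (ha : a ≠ 0) (hb : b ≠ 0)
    (R : ℕ) (hR : R = Nat.card {c : F // (ℓ : F) * c = a ∧ c ^ ℓ = b}) :
    (R = 0 ∨ R = 1) ∧
      Nat.card {α : E // Algebra.trace F E α = a ∧ Algebra.norm F α = b} ≡ R [MOD ℓ] := by
  subst hR hE
  rw [← Nat.le_one_iff_eq_zero_or_eq_one]
  exact trace_norm_count_mod_prime_general (n := 1) hℓ (pow_one _).symm a b
end

section
/- Let q be a prime power, let F_q be the finite field with q elements, let n ≥ 1 be an integer, let ψ be the canonical additive character of F_q and ψ_{n+1} = ψ ∘ Tr_{F_{q^{n+1}}/F_q} the induced canonical additive character of F_{q^{n+1}}. Then for every multiplicative character χ of F_q^*, Σ_{x ∈ F_{q^{n+1}}^*} ψ_{n+1}(x)·χ(Norm_{F_{q^{n+1}}/F_q}(x)) = (−1)^n · G(χ)^{n+1}, where G(χ) = Σ_{x ∈ F_q^*} ψ(x)χ(x) is the Gauss sum over F_q (the Davenport–Hasse identity). -/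
/-!
Weigh a monic polynomial `f` over `𝔽_q` by `w f = ψ (sum of roots) * χ (product of roots)`. The
weight is completely multiplicative, and the generating series `L = ∑ w f T ^ deg f` is
`1 + G(χ) T`: in degree `≥ 2`, translating the subleading coefficient multiplies the coefficient
of `L` by a value of `ψ` different from `1`. Unique factorization, in the form
`∑_{h ∣ f} Λ h = deg f`, gives `T L' = L * ∑ Λ f w f T ^ deg f`. The coefficient of `T ^ d` in the
last factor is the lifted Gauss sum over the extension of degree `d`, because `Λ f` counts the
elements of that extension whose characteristic polynomial is `f`.
-/

namespace DavenportHasse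

open Polynomial UniqueFactorizationMonoid IntermediateField
open scoped PowerSeries

section VonMangoldt

variable {F : Type*} [Field F]

theorem exists_monic_irreducible_pow_eq {f : F[X]} (hf : f.Monic) (hpow : IsPrimePow f) :
    ∃ (P : F[X]) (k : ℕ), P.Monic ∧ Irreducible P ∧ k ≠ 0 ∧ P ^ k = f := by
  classical
  obtain ⟨P, k, hP, hk, rfl⟩ := hpow
  refine ⟨normalize P, k, monic_normalize hP.ne_zero,
    (normalize_associated P).symm.irreducible hP.irreducible, hk.ne', ?_⟩
  exact eq_of_monic_of_associated ((monic_normalize hP.ne_zero).pow k) hf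
    (normalize_associated P).pow_pow

variable [DecidableEq F]

open Classical in
/-- The von Mangoldt function of `F[X]`: `deg P` on a positive power of an irreducible `P`, and `0`
elsewhere. The prime `P` is recovered up to a unit as the radical of its powers, and `deg P` takes
the place of `log p`. -/
noncomputable def vonMangoldt (f : F[X]) : ℕ :=
  if IsPrimePow f then (radical f).natDegree else 0

theorem radical_pow_of_monic {P : F[X]} (hP : P.Monic) (hirr : Irreducible P) {k : ℕ} (hk : k ≠ 0) :
    radical (P ^ k) = P := by
  rw [radical_pow_of_prime hirr.prime hk, hP.normalize_eq_self]

theorem vonMangoldt_pow {P : F[X]} (hP : P.Monic) (hirr : Irreducible P) {k : ℕ} (hk : k ≠ 0) :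
    vonMangoldt (P ^ k) = P.natDegree := by
  rw [vonMangoldt, if_pos (hirr.prime.isPrimePow.pow hk), radical_pow_of_monic hP hirr hk]

theorem sum_natDegree_normalizedFactors {f : F[X]} (hf : f ≠ 0) :
    ∑ P ∈ (normalizedFactors f).toFinset, (normalizedFactors f).count P * P.natDegree =
      f.natDegree := by
  calc
    _ = ((normalizedFactors f).map natDegree).sum := (Finset.sum_multiset_map_count _ _).symm
    _ = (normalizedFactors f).prod.natDegree :=
      (natDegree_multiset_prod _ (zero_notMem_normalizedFactors f)).symm
    _ = f.natDegree := natDegree_eq_of_degree_eq <|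
      degree_eq_degree_of_associated (prod_normalizedFactors hf)

theorem pow_dvd_iff_le_count_normalizedFactors {P f : F[X]} (hP : P.Monic) (hirr : Irreducible P)
    (hf : f ≠ 0) (k : ℕ) : P ^ k ∣ f ↔ k ≤ (normalizedFactors f).count P := by
  rw [pow_dvd_iff_le_emultiplicity, emultiplicity_eq_count_normalizedFactors hirr hf,
    hP.normalize_eq_self, Nat.cast_le]

theorem mem_normalizedFactors_iff_monic {P f : F[X]} (hf : f ≠ 0) :
    P ∈ normalizedFactors f ↔ P.Monic ∧ Irreducible P ∧ P ∣ f := by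
  rw [mem_normalizedFactors_iff' hf]
  refine ⟨fun ⟨hirr, hnorm, hdvd⟩ => ⟨?_, hirr, hdvd⟩,
    fun ⟨hP, hirr, hdvd⟩ => ⟨hirr, hP.normalize_eq_self, hdvd⟩⟩
  rw [← hnorm]
  exact monic_normalize hirr.ne_zero

theorem mem_sigma_Icc_count_iff {P f : F[X]} (hf : f ≠ 0) {k : ℕ} :
    (⟨P, k⟩ : (_ : F[X]) × ℕ) ∈ (normalizedFactors f).toFinset.sigma
        (fun Q => Finset.Icc 1 ((normalizedFactors f).count Q)) ↔
      P.Monic ∧ Irreducible P ∧ k ≠ 0 ∧ P ^ k ∣ f := by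
  rw [Finset.mem_sigma, Multiset.mem_toFinset, mem_normalizedFactors_iff_monic hf, Finset.mem_Icc,
    Nat.one_le_iff_ne_zero]
  constructor
  · rintro ⟨⟨hP, hirr, -⟩, hk, hcount⟩
    exact ⟨hP, hirr, hk, (pow_dvd_iff_le_count_normalizedFactors hP hirr hf k).mpr hcount⟩
  · rintro ⟨hP, hirr, hk, hdvd⟩
    exact ⟨⟨hP, hirr, (dvd_pow_self P hk).trans hdvd⟩, hk,
      (pow_dvd_iff_le_count_normalizedFactors hP hirr hf k).mp hdvd⟩

theorem sum_natDegree_radical_eq_sum_count_mul {f : F[X]} (hf : f ≠ 0) {s : Finset F[X]}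
    (hs : ∀ h, h ∈ s ↔ h.Monic ∧ h ∣ f ∧ IsPrimePow h) :
    ∑ h ∈ s, (radical h).natDegree =
      ∑ P ∈ (normalizedFactors f).toFinset, (normalizedFactors f).count P * P.natDegree := by
  calc
    _ = ∑ t ∈ (normalizedFactors f).toFinset.sigma
            fun P => Finset.Icc 1 ((normalizedFactors f).count P), t.1.natDegree := by
      symm
      refine Finset.sum_bij (fun t _ => t.1 ^ t.2) ?_ ?_ ?_ ?_
      · rintro ⟨P, k⟩ ht
        rw [mem_sigma_Icc_count_iff hf] at ht
        obtain ⟨hP, hirr, hk, hdvd⟩ := ht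
        exact (hs _).mpr ⟨hP.pow k, hdvd, hirr.prime.isPrimePow.pow hk⟩
      · rintro ⟨P, k⟩ hPk ⟨Q, l⟩ hQl (hpow : P ^ k = Q ^ l)
        rw [mem_sigma_Icc_count_iff hf] at hPk hQl
        obtain ⟨hP, hirrP, hk, -⟩ := hPk
        obtain ⟨hQ, hirrQ, hl, -⟩ := hQl
        obtain rfl : P = Q := by
          rw [← radical_pow_of_monic hP hirrP hk, hpow, radical_pow_of_monic hQ hirrQ hl]
        rw [pow_injective_of_not_isUnit hirrP.not_isUnit hirrP.ne_zero hpow]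
      · intro h hh
        obtain ⟨hmon, hdvd, hpow⟩ := (hs h).mp hh
        obtain ⟨P, k, hP, hirr, hk, rfl⟩ := exists_monic_irreducible_pow_eq hmon hpow
        exact ⟨⟨P, k⟩, (mem_sigma_Icc_count_iff hf).mpr ⟨hP, hirr, hk, hdvd⟩, rfl⟩
      · rintro ⟨P, k⟩ ht
        obtain ⟨hP, hirr, hk, -⟩ := (mem_sigma_Icc_count_iff hf).mp ht
        rw [radical_pow_of_monic hP hirr hk]
    _ = ∑ P ∈ (normalizedFactors f).toFinset, (normalizedFactors f).count P * P.natDegree := by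
      simp [Finset.sum_sigma]

/-- The monic divisors of a nonzero polynomial, built as the products of sub-multisets of its
monic irreducible factors. -/
noncomputable def monicDivisors (f : F[X]) : Finset F[X] :=
  ((normalizedFactors f).powerset.map Multiset.prod).toFinset

theorem mem_monicDivisors {f h : F[X]} (hf : f ≠ 0) : h ∈ monicDivisors f ↔ h.Monic ∧ h ∣ f := by
  simp only [monicDivisors, Multiset.mem_toFinset, Multiset.mem_map, Multiset.mem_powerset]
  constructor
  · rintro ⟨s, hs, rfl⟩
    have hmonic : ∀ P ∈ s, P.Monic := fun P hP =>
      ((mem_normalizedFactors_iff_monic hf).mp (Multiset.mem_of_le hs hP)).1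
    exact ⟨by simpa using monic_multiset_prod_of_monic s id hmonic,
      (Multiset.prod_dvd_prod_of_le hs).trans (prod_normalizedFactors hf).dvd⟩
  · rintro ⟨hh, hdvd⟩
    refine ⟨normalizedFactors h,
      (dvd_iff_normalizedFactors_le_normalizedFactors hh.ne_zero hf).mp hdvd, ?_⟩
    rw [prod_normalizedFactors_eq hh.ne_zero, hh.normalize_eq_self]

theorem sum_vonMangoldt_monicDivisors {f : F[X]} (hf : f ≠ 0) :
    ∑ h ∈ monicDivisors f, vonMangoldt h = f.natDegree := by
  simp only [vonMangoldt, ← Finset.sum_filter]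
  rw [sum_natDegree_radical_eq_sum_count_mul hf (by simp [mem_monicDivisors hf, and_assoc]),
    sum_natDegree_normalizedFactors hf]

end VonMangoldt

section DirichletSeries

variable (F : Type*) [Field F]

theorem finite_monic_natDegree_eq [Finite F] (m : ℕ) :
    {f : F[X] | f.Monic ∧ f.natDegree = m}.Finite :=
  Finite.of_equiv _ ((monicEquivDegreeLT m).trans (degreeLTEquiv F m).toEquiv).symm

/-- The monic polynomials of degree `m` over a finite field. -/
noncomputable def monicsOfNatDegree [Finite F] (m : ℕ) : Finset F[X] :=
  (finite_monic_natDegree_eq F m).toFinset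

variable {F} [Finite F] {R : Type*}

@[simp]
theorem mem_monicsOfNatDegree {m : ℕ} {f : F[X]} :
    f ∈ monicsOfNatDegree F m ↔ f.Monic ∧ f.natDegree = m := by
  simp [monicsOfNatDegree]

/-- The Dirichlet series `∑ w f T ^ deg f` over the monic polynomials `f`, as a power series in
`T = q ^ (-s)`. -/
noncomputable def dirichletSeries [Semiring R] (w : F[X] → R) : R⟦X⟧ :=
  .mk fun m => ∑ f ∈ monicsOfNatDegree F m, w f

theorem coeff_dirichletSeries [Semiring R] (w : F[X] → R) (m : ℕ) :
    PowerSeries.coeff m (dirichletSeries w) = ∑ f ∈ monicsOfNatDegree F m, w f :=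
  PowerSeries.coeff_mk _ _

theorem dirichletSeries_mul [DecidableEq F] [Semiring R] (u v : F[X] → R) :
    dirichletSeries u * dirichletSeries v =
      dirichletSeries fun f => ∑ h ∈ monicDivisors f, u h * v (f / h) := by
  ext m
  simp only [PowerSeries.coeff_mul, coeff_dirichletSeries, Finset.sum_mul_sum,
    ← Finset.sum_product', Finset.sum_sigma']
  refine Finset.sum_bij' (fun t _ => ⟨t.2.1 * t.2.2, t.2.1⟩)
    (fun t _ => ⟨(t.2.natDegree, (t.1 / t.2).natDegree), (t.2, t.1 / t.2)⟩) ?_ ?_ ?_ ?_ ?_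
  · rintro ⟨⟨i, j⟩, h, g⟩ ht
    obtain ⟨rfl, ⟨hh, rfl⟩, hg, rfl⟩ := by simpa using ht
    simp [mem_monicDivisors (hh.mul hg).ne_zero, hh.mul hg, hh.natDegree_mul hg, hh]
  · rintro ⟨f, h⟩ ht
    obtain ⟨⟨hf, rfl⟩, hh⟩ := by simpa using ht
    obtain ⟨hmonh, g, rfl⟩ := (mem_monicDivisors hf.ne_zero).mp hh
    have hmong : g.Monic := hmonh.of_mul_monic_left hf
    simp [mul_div_cancel_left₀ g hmonh.ne_zero, hmonh, hmong, hmonh.natDegree_mul hmong]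
  · rintro ⟨⟨i, j⟩, h, g⟩ ht
    obtain ⟨rfl, ⟨hh, rfl⟩, -, rfl⟩ := by simpa using ht
    simp [mul_div_cancel_left₀ g hh.ne_zero]
  · rintro ⟨f, h⟩ ht
    obtain ⟨⟨hf, rfl⟩, hh⟩ := by simpa using ht
    obtain ⟨hmonh, g, rfl⟩ := (mem_monicDivisors hf.ne_zero).mp hh
    simp [mul_div_cancel_left₀ g hmonh.ne_zero]
  · rintro ⟨⟨i, j⟩, h, g⟩ ht
    obtain ⟨rfl, ⟨hh, rfl⟩, -, rfl⟩ := by simpa using ht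
    simp [mul_div_cancel_left₀ g hh.ne_zero]

theorem X_mul_derivative_dirichletSeries [DecidableEq F] [CommSemiring R] {w : F[X] → R}
    (hw : ∀ f g : F[X], f.Monic → g.Monic → w (f * g) = w f * w g) :
    PowerSeries.X * d⁄dX R (dirichletSeries w) =
      dirichletSeries (fun f => vonMangoldt f * w f) * dirichletSeries w := by
  ext m
  have hcoeff : PowerSeries.coeff m (PowerSeries.X * d⁄dX R (dirichletSeries w)) =
      m * ∑ f ∈ monicsOfNatDegree F m, w f := by
    cases m with
    | zero => simp
    | succ m =>
      simp [PowerSeries.coeff_succ_X_mul, PowerSeries.coeff_derivative, coeff_dirichletSeries,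
        mul_comm]
  rw [hcoeff, dirichletSeries_mul, coeff_dirichletSeries, Finset.mul_sum]
  refine Finset.sum_congr rfl fun f hf => ?_
  obtain ⟨hmon, hdeg⟩ := mem_monicsOfNatDegree.mp hf
  rw [← hdeg, ← sum_vonMangoldt_monicDivisors hmon.ne_zero, Nat.cast_sum, Finset.sum_mul]
  refine Finset.sum_congr rfl fun h hh => ?_
  obtain ⟨hmonh, g, rfl⟩ := (mem_monicDivisors hmon.ne_zero).mp hh
  rw [mul_div_cancel_left₀ g hmonh.ne_zero, hw h g hmonh (hmonh.of_mul_monic_left hmon), mul_assoc]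

end DirichletSeries

theorem monic_add_C_mul_X_pow {A : Type*} [Semiring A] {f : A[X]} (hf : f.Monic) {k : ℕ}
    (hk : k < f.natDegree) (a : A) :
    (f + C a * X ^ k).Monic ∧ (f + C a * X ^ k).natDegree = f.natDegree := by
  have hdeg : (C a * X ^ k).degree < f.degree := by
    rw [degree_eq_natDegree (ne_zero_of_natDegree_gt hk)]
    exact (degree_C_mul_X_pow_le k a).trans_lt (by exact_mod_cast hk)
  exact ⟨hf.add_of_left hdeg, natDegree_add_eq_left_of_degree_lt hdeg⟩

section Weight

variable {F R : Type*} [CommRing F] [CommSemiring R] (χ : MulChar F R) (ψ : AddChar F R)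

/-- The weight `ψ (sum of roots) * χ (product of roots)` of a monic polynomial over a field, with
the roots taken in a splitting field, and their sum and product expressed through the coefficients
so that the definition makes sense over any commutative ring. -/
noncomputable def weight (f : F[X]) : R :=
  ψ (-f.nextCoeff) * χ ((-1) ^ f.natDegree * f.coeff 0)

theorem weight_one : weight χ ψ 1 = 1 := by
  simp [weight, nextCoeff]

theorem weight_mul {f g : F[X]} (hf : f.Monic) (hg : g.Monic) :
    weight χ ψ (f * g) = weight χ ψ f * weight χ ψ g := by
  simp only [weight, hf.nextCoeff_mul hg, hf.natDegree_mul hg, mul_coeff_zero, neg_add,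
    AddChar.map_add_eq_mul, pow_add, map_mul]
  ring

theorem weight_pow {f : F[X]} (hf : f.Monic) (k : ℕ) : weight χ ψ (f ^ k) = weight χ ψ f ^ k := by
  induction k with
  | zero => simp only [pow_zero, weight_one]
  | succ k ih => rw [pow_succ, weight_mul χ ψ (hf.pow k) hf, ih, pow_succ]

theorem weight_X_sub_C [Nontrivial F] (a : F) : weight χ ψ (X - C a) = χ a * ψ a := by
  simp [weight, nextCoeff_X_sub_C, mul_comm]

theorem weight_add_C_mul_X_pow_pred {f : F[X]} (hf : f.Monic) (hdeg : 2 ≤ f.natDegree) (a : F) :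
    weight χ ψ (f + C a * X ^ (f.natDegree - 1)) = ψ (-a) * weight χ ψ f := by
  obtain ⟨-, hdeg'⟩ := monic_add_C_mul_X_pow hf (k := f.natDegree - 1) (by omega) a
  have hzero : 0 ≠ f.natDegree - 1 := by omega
  rw [weight, weight, nextCoeff_of_natDegree_pos (by omega), nextCoeff_of_natDegree_pos (by omega),
    hdeg']
  simp only [coeff_add, coeff_C_mul_X_pow, if_true, if_neg hzero, add_zero, neg_add,
    AddChar.map_add_eq_mul]
  ring

end Weight

section WeightSums

variable {F R : Type*} [Field F] [Finite F] [CommSemiring R] (χ : MulChar F R)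

theorem sum_weight_natDegree_zero (ψ : AddChar F R) :
    ∑ f ∈ monicsOfNatDegree F 0, weight χ ψ f = 1 := by
  have hone : monicsOfNatDegree F 0 = {1} := by
    ext f
    rw [mem_monicsOfNatDegree, Finset.mem_singleton]
    exact ⟨fun ⟨hf, hdeg⟩ => hf.natDegree_eq_zero.mp hdeg, by rintro rfl; simp⟩
  rw [hone, Finset.sum_singleton, weight_one]

theorem sum_weight_of_two_le_natDegree [IsCancelMulZero R] {ψ : AddChar F R} (hψ : ψ ≠ 1)
    {m : ℕ} (hm : 2 ≤ m) : ∑ f ∈ monicsOfNatDegree F m, weight χ ψ f = 0 := by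
  obtain ⟨a, ha⟩ := AddChar.ne_one_iff.mp hψ
  have hmem (b : F) {f : F[X]} (hf : f ∈ monicsOfNatDegree F m) :
      f + C b * X ^ (m - 1) ∈ monicsOfNatDegree F m := by
    obtain ⟨hmon, rfl⟩ := mem_monicsOfNatDegree.mp hf
    exact mem_monicsOfNatDegree.mpr (monic_add_C_mul_X_pow hmon (by omega) b)
  have htranslate : ∑ f ∈ monicsOfNatDegree F m, weight χ ψ f =
      ψ a * ∑ f ∈ monicsOfNatDegree F m, weight χ ψ f := by
    rw [Finset.mul_sum]
    refine Finset.sum_nbij' (fun f => f + C a * X ^ (m - 1)) (fun f => f + C (-a) * X ^ (m - 1))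
      (fun f hf => hmem a hf) (fun f hf => hmem (-a) hf) (by simp) (by simp) fun f hf => ?_
    obtain ⟨hmon, rfl⟩ := mem_monicsOfNatDegree.mp hf
    rw [weight_add_C_mul_X_pow_pred χ ψ hmon hm, ← mul_assoc, ← AddChar.map_add_eq_mul]
    simp
  exact eq_zero_of_mul_eq_self_left ha htranslate.symm

end WeightSums

theorem coeff_succ_of_mul_one_add_C_mul_X_eq {R : Type*} [CommRing R] {g : R} {S : R⟦X⟧}
    (hS : S * (1 + PowerSeries.C g * PowerSeries.X) = PowerSeries.C g * PowerSeries.X) (n : ℕ) :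
    PowerSeries.coeff (n + 1) S = (-1) ^ n * g ^ (n + 1) := by
  have hcoeff (k : ℕ) : PowerSeries.coeff (k + 1) S + PowerSeries.coeff k S * g =
      if k = 0 then g else 0 := by
    have := congrArg (PowerSeries.coeff (k + 1)) hS
    simpa [mul_add, ← mul_assoc, PowerSeries.coeff_succ_mul_X, PowerSeries.coeff_C] using this
  have hzero : PowerSeries.coeff 0 S = 0 := by
    simpa using congrArg (PowerSeries.coeff 0) hS
  induction n with
  | zero => simpa [hzero] using hcoeff 0
  | succ n ih =>
    have := hcoeff (n + 1)
    rw [ih, if_neg n.succ_ne_zero] at this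
    linear_combination this

section GaussSum

variable {F R : Type*} [Field F] [Fintype F] [CommRing R] (χ : MulChar F R)

theorem sum_weight_natDegree_one (ψ : AddChar F R) :
    ∑ f ∈ monicsOfNatDegree F 1, weight χ ψ f = gaussSum χ ψ := by
  symm
  refine Finset.sum_bij (fun a _ => X - C a) (fun a _ => ?_) (fun a _ b _ h => ?_) (fun f hf => ?_)
    fun a _ => (weight_X_sub_C χ ψ a).symm
  · simp [monic_X_sub_C]
  · simpa using h
  · obtain ⟨hmon, hdeg⟩ := mem_monicsOfNatDegree.mp hf
    refine ⟨-f.coeff 0, Finset.mem_univ _, ?_⟩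
    rw [hmon.eq_X_add_C hdeg]
    simp

theorem dirichletSeries_weight [IsDomain R] {ψ : AddChar F R} (hψ : ψ ≠ 1) :
    dirichletSeries (weight χ ψ) = 1 + PowerSeries.C (gaussSum χ ψ) * PowerSeries.X := by
  ext m
  rw [coeff_dirichletSeries]
  match m with
  | 0 => simp [sum_weight_natDegree_zero]
  | 1 => simp [sum_weight_natDegree_one, PowerSeries.coeff_one]
  | m + 2 => simp [sum_weight_of_two_le_natDegree χ hψ, PowerSeries.coeff_one]

theorem sum_vonMangoldt_mul_weight [DecidableEq F] [IsDomain R] {ψ : AddChar F R} (hψ : ψ ≠ 1)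
    (n : ℕ) :
    ∑ f ∈ monicsOfNatDegree F (n + 1), vonMangoldt f * weight χ ψ f =
      (-1) ^ n * gaussSum χ ψ ^ (n + 1) := by
  have hlog := X_mul_derivative_dirichletSeries fun f g => weight_mul χ ψ (f := f) (g := g)
  rw [dirichletSeries_weight χ hψ] at hlog
  rw [← coeff_dirichletSeries fun f : F[X] => (vonMangoldt f : R) * weight χ ψ f]
  refine coeff_succ_of_mul_one_add_C_mul_X_eq ?_ n
  rw [← hlog]
  simp [mul_comm]

end GaussSum

section FiniteExtension

variable (F : Type*) {E : Type*} [Field F] [Field E] [Algebra F E]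

/-- The characteristic polynomial over `F` of multiplication by `x` on the extension `E`, given as
the power of the minimal polynomial of `x` that has degree `[E : F]`. -/
noncomputable def fieldCharpoly (x : E) : F[X] :=
  minpoly F x ^ Module.finrank F⟮x⟯ E

variable [FiniteDimensional F E]

theorem fieldCharpoly_monic (x : E) : (fieldCharpoly F x).Monic :=
  (minpoly.monic (.of_finite F x)).pow _

theorem natDegree_fieldCharpoly (x : E) :
    (fieldCharpoly F x).natDegree = Module.finrank F E := by
  rw [fieldCharpoly, natDegree_pow, ← IntermediateField.adjoin.finrank (.of_finite F x), mul_comm,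
    Module.finrank_mul_finrank]

theorem isPrimePow_fieldCharpoly (x : E) : IsPrimePow (fieldCharpoly F x) :=
  (minpoly.irreducible (.of_finite F x)).prime.isPrimePow.pow Module.finrank_pos.ne'

theorem radical_fieldCharpoly [DecidableEq F] (x : E) :
    radical (fieldCharpoly F x) = minpoly F x :=
  radical_pow_of_monic (minpoly.monic (.of_finite F x)) (minpoly.irreducible (.of_finite F x))
    Module.finrank_pos.ne'

variable {F}

theorem fieldCharpoly_eq_pow_iff {P : F[X]} (hP : P.Monic) (hirr : Irreducible P) {k : ℕ}
    (hdeg : (P ^ k).natDegree = Module.finrank F E) {x : E} :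
    fieldCharpoly F x = P ^ k ↔ minpoly F x = P := by
  classical
  have hk : k ≠ 0 := by
    rintro rfl
    simp [Module.finrank_pos.ne] at hdeg
  constructor
  · intro h
    rw [← radical_fieldCharpoly, h, radical_pow_of_monic hP hirr hk]
  · rintro rfl
    rw [← natDegree_fieldCharpoly F x, fieldCharpoly, natDegree_pow, natDegree_pow] at hdeg
    rw [fieldCharpoly, Nat.eq_of_mul_eq_mul_right hirr.natDegree_pos hdeg]

theorem weight_fieldCharpoly {R : Type*} [CommSemiring R] (χ : MulChar F R) (ψ : AddChar F R)
    (x : E) :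
    weight χ ψ (fieldCharpoly F x) = χ (Algebra.norm F x) * ψ (Algebra.trace F E x) := by
  have hx : IsIntegral F x := .of_finite F x
  have hnorm : Algebra.norm F (AdjoinSimple.gen F x) =
      (-1) ^ (minpoly F x).natDegree * (minpoly F x).coeff 0 := by
    simpa [minpoly_gen F x] using
      Algebra.PowerBasis.norm_gen_eq_coeff_zero_minpoly (adjoin.powerBasis hx)
  rw [fieldCharpoly, weight_pow χ ψ (minpoly.monic hx), weight, trace_eq_trace_adjoin,
    trace_adjoinSimpleGen hx, Algebra.norm_eq_norm_adjoin, hnorm, AddChar.map_nsmul_eq_pow, map_pow,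
    ← mul_pow, mul_comm]

end FiniteExtension

section FiniteFieldExtension

variable {F E : Type*} [Field F] [Finite F] [Field E] [Algebra F E]

theorem splits_map_of_natDegree_dvd_finrank [Finite E] {P : F[X]} (hirr : Irreducible P)
    (hdvd : P.natDegree ∣ Module.finrank F E) : (P.map (algebraMap F E)).Splits := by
  have hPE : P.map (algebraMap F E) ∣ X ^ Nat.card E - X := by
    have := map_dvd (algebraMap F E) (hirr.natDegree_dvd_iff_dvd_X_pow_card_pow_sub_X.mp hdvd)
    rwa [← Module.natCard_eq_pow_finrank (K := F) (V := E), Polynomial.map_sub, Polynomial.map_pow,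
      map_X] at this
  exact splits_X_pow_nat_card_sub_X.of_dvd
    (FiniteField.X_pow_card_sub_X_ne_zero E Finite.one_lt_card) hPE

variable [DecidableEq F] [Fintype E]

theorem card_minpoly_eq {P : F[X]} (hP : P.Monic) (hirr : Irreducible P)
    (hdvd : P.natDegree ∣ Module.finrank F E) :
    ({x : E | minpoly F x = P} : Finset E).card = P.natDegree := by
  rw [← card_rootSet_eq_natDegree (PerfectField.separable_of_irreducible hirr)
    (splits_map_of_natDegree_dvd_finrank hirr hdvd), ← Set.toFinset_card]
  congr 1
  ext x
  rw [Set.mem_toFinset, mem_rootSet, Finset.mem_filter_univ]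
  constructor
  · rintro rfl
    exact ⟨hP.ne_zero, minpoly.aeval F x⟩
  · rintro ⟨-, hroot⟩
    exact (minpoly.eq_of_irreducible_of_monic hirr hroot hP).symm

theorem card_fieldCharpoly_eq {f : F[X]} (hf : f.Monic) (hdeg : f.natDegree = Module.finrank F E) :
    ({x : E | fieldCharpoly F x = f} : Finset E).card = vonMangoldt f := by
  by_cases hpow : IsPrimePow f
  · obtain ⟨P, k, hP, hirr, hk, rfl⟩ := exists_monic_irreducible_pow_eq hf hpow
    simp only [fieldCharpoly_eq_pow_iff hP hirr hdeg, vonMangoldt_pow hP hirr hk]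
    refine card_minpoly_eq hP hirr ⟨k, ?_⟩
    rw [← hdeg, natDegree_pow, mul_comm]
  · rw [vonMangoldt, if_neg hpow, Finset.card_eq_zero, Finset.filter_eq_empty_iff]
    rintro x - rfl
    exact hpow (isPrimePow_fieldCharpoly F x)

theorem sum_comp_fieldCharpoly {R : Type*} [Semiring R] (w : F[X] → R) :
    ∑ x : E, w (fieldCharpoly F x) =
      ∑ f ∈ monicsOfNatDegree F (Module.finrank F E), vonMangoldt f * w f := by
  have hmem (x : E) : fieldCharpoly F x ∈ monicsOfNatDegree F (Module.finrank F E) :=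
    mem_monicsOfNatDegree.mpr ⟨fieldCharpoly_monic F x, natDegree_fieldCharpoly F x⟩
  rw [← Finset.sum_fiberwise_of_maps_to' (fun x _ => hmem x)]
  refine Finset.sum_congr rfl fun f hf => ?_
  obtain ⟨hmon, hdeg⟩ := mem_monicsOfNatDegree.mp hf
  rw [Finset.sum_const, card_fieldCharpoly_eq hmon hdeg, nsmul_eq_mul]

end FiniteFieldExtension

/-- The lift `χ ∘ Norm` of a multiplicative character of `F` to a finite extension `E`. -/
noncomputable def normLift {F R : Type*} [Field F] [CommMonoidWithZero R] (E : Type*) [Field E]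
    [Algebra F E] [FiniteDimensional F E] (χ : MulChar F R) : MulChar E R where
  toMonoidHom := χ.toMonoidHom.comp (Algebra.norm F)
  map_nonunit' x hx := by
    obtain rfl : x = 0 := by simpa using hx
    simpa using χ.map_zero

/-- The lift `ψ ∘ Tr` of an additive character of `F` to an extension `E`. -/
noncomputable def traceLift {F R : Type*} [CommRing F] [Monoid R] (E : Type*) [CommRing E]
    [Algebra F E] (ψ : AddChar F R) : AddChar E R :=
  ψ.compAddMonoidHom (Algebra.trace F E).toAddMonoidHom

theorem gaussSum_eq_sum_units {A R : Type*} [CommRing A] [Fintype A] [Fintype Aˣ] [CommRing R]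
    (χ : MulChar A R) (ψ : AddChar A R) : gaussSum χ ψ = ∑ x : Aˣ, ψ x * χ x := by
  refine (Fintype.sum_of_injective (Units.val : Aˣ → A) Units.val_injective _ _
    (fun x hx => ?_) fun x => mul_comm (ψ x) (χ x)).symm
  have hunit : ¬IsUnit x := fun ⟨u, hu⟩ => hx ⟨u, hu⟩
  rw [χ.map_nonunit hunit, zero_mul]

section CanonicalCharacter

variable (p : ℕ) [Fact p.Prime] (F : Type*) [Field F] [Algebra (ZMod p) F]

/-- The canonical additive character `x ↦ exp (2 π i Tr x / p)` of a field of characteristic `p`. -/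
noncomputable def canonicalAddChar : AddChar F ℂ :=
  traceLift F (ZMod.stdAddChar (N := p))

theorem canonicalAddChar_apply (x : F) : canonicalAddChar p F x =
    Complex.exp (2 * Real.pi * Complex.I * ((Algebra.trace (ZMod p) F x).val : ℂ) / (p : ℂ)) := by
  simpa using! ZMod.stdAddChar_coe (N := p) ((Algebra.trace (ZMod p) F x).val : ℤ)

theorem canonicalAddChar_ne_one [Finite F] : canonicalAddChar p F ≠ 1 := by
  obtain ⟨a, ha⟩ := Algebra.trace_surjective (ZMod p) F 1
  refine AddChar.ne_one_iff.mpr ⟨a, fun h => one_ne_zero (α := ZMod p) ?_⟩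
  apply ZMod.injective_stdAddChar
  calc ZMod.stdAddChar (1 : ZMod p)
    _ = canonicalAddChar p F a := congrArg ZMod.stdAddChar ha.symm
    _ = ZMod.stdAddChar (0 : ZMod p) := by rw [h, AddChar.map_zero_eq_one]

end CanonicalCharacter

end DavenportHasse

open DavenportHasse in
theorem davenport_hasse_general {F E R : Type*} [Field F] [Fintype F] [Field E] [Fintype E]
    [Algebra F E] [CommRing R] [IsDomain R] (χ : MulChar F R) {ψ : AddChar F R} (hψ : ψ ≠ 1) {n : ℕ}
    (hE : Module.finrank F E = n + 1) :
    gaussSum (normLift E χ) (traceLift E ψ) = (-1) ^ n * gaussSum χ ψ ^ (n + 1) := by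
  classical
  calc gaussSum (normLift E χ) (traceLift E ψ)
    _ = ∑ x : E, weight χ ψ (fieldCharpoly F x) :=
      Finset.sum_congr rfl fun x _ => (weight_fieldCharpoly χ ψ x).symm
    _ = ∑ f ∈ monicsOfNatDegree F (n + 1), vonMangoldt f * weight χ ψ f := by
      rw [sum_comp_fieldCharpoly, hE]
    _ = (-1) ^ n * gaussSum χ ψ ^ (n + 1) := sum_vonMangoldt_mul_weight χ hψ n

/-- **Davenport–Hasse identity**: with `ψ` the canonical additive character of `𝔽_q` and
`ψ_{n+1} = ψ ∘ Tr` the induced canonical additive character of `𝔽_{q^{n+1}}`, for every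
multiplicative character `χ` of `𝔽_q^*`,
`Σ_{x ∈ 𝔽_{q^{n+1}}^*} ψ_{n+1}(x) χ(Norm(x)) = (−1)^n G(χ)^{n+1}`. -/
theorem davenport_hasse (p q n : ℕ) [Fact p.Prime] (hn : 1 ≤ n)
    (F E : Type*) [Field F] [Fintype F] [DecidableEq F] [Algebra (ZMod p) F]
    [Field E] [Fintype E] [DecidableEq E] [Algebra F E]
    (hq : Fintype.card F = q) (hE : Module.finrank F E = n + 1)
    (ψ : F → ℂ)
    (hψ : ∀ x : F, ψ x = Complex.exp (2 * Real.pi * Complex.I *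
        ((Algebra.trace (ZMod p) F x).val : ℂ) / (p : ℂ)))
    (G : MulChar F ℂ → ℂ)
    (hG : ∀ χ : MulChar F ℂ, G χ = ∑ x : Fˣ, ψ x * χ x) :
    ∀ χ : MulChar F ℂ,
      ∑ x : Eˣ, ψ (Algebra.trace F E x) * χ (Algebra.norm F (x : E))
        = (-1) ^ n * G χ ^ (n + 1) := by
  intro χ
  obtain rfl : ψ = DavenportHasse.canonicalAddChar p F :=
    funext fun x => (hψ x).trans (DavenportHasse.canonicalAddChar_apply p F x).symm
  simpa only [hG, DavenportHasse.gaussSum_eq_sum_units] using!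
    davenport_hasse_general χ (DavenportHasse.canonicalAddChar_ne_one p F) hE
end
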